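/- Let m be a positive half-integer and s a positive half-odd integer (2s an odd positive integer). For τ in the upper half-plane and z1, z2 ∈ ℂ such that neither 2z1 nor 2z2 lies in ℤ + ℤ·(2τ), the following identity holds: θ_{0,2m+1}(τ, (−1/2 + 2m(z1−z2))/(2m+1)) · Φ^{[m,s]}(2τ, 2z1, 2z2, 0) = −i η(2τ)³ { θ_{0,2m+1}(τ, (1/2+z1−z2)/(2m+1) + z1+z2) / ϑ_{11}(2τ, 2z1) + θ_{0,2m+1}(τ, (1/2+z1−z2)/(2m+1) − z1−z2) / ϑ_{11}(2τ, 2z2) } + Σ_{j=1}^∞ Σ_{r=1}^{j} Σ_{k odd, 1≤k≤2m−1} (−1)^j q^{(2m+1)j² − (4m(j−r)+k)²/(8m)} { e^{πi(4mr−k)(z1−z2)} + e^{−πi(4mr−k)(z1−z2)} } [θ_{k,2m} − θ_{−k,2m}](τ, z1+z2) − Σ_{j=1}^∞ Σ_{r=0}^{j−1} Σ_{k odd, 1≤k≤2m−1} (−1)^j q^{(2m+1)j² − (4m(j−r)−k)²/(8m)} { e^{πi(4mr+k)(z1−z2)} + e^{−πi(4mr+k)(z1−z2)} } [θ_{k,2m}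 − θ_{−k,2m}](τ, z1+z2) − θ_{0,2m+1}(τ, (−1/2 + 2m(z1−z2))/(2m+1)) · Σ_{k=0}^{s−3/2} e^{πi(1+2k)(z1−z2)} q^{−(1+2k)²/(8m)} [θ_{1/2+k, m} − θ_{−(1/2+k), m}](2τ, 2(z1+z2)), where in the last sum k runs over the integers 0, 1, …, s−3/2 (empty if s = 1/2). -/

import Mathlib

open Complex

noncomputable section

namespace Wakimoto

/-- `qpow τ x = e^{2πiτx}`, i.e. `q^x` where `q = e^{2πiτ}`. -/
def qpow (τ x : ℂ) : ℂ := Complex.exp (2 * Real.pi * Complex.I * τ * x)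

/-- `e2 z = e^{2πiz}`. -/
def e2 (z : ℂ) : ℂ := Complex.exp (2 * Real.pi * Complex.I * z)

/-- The mock theta function `Φ^{[m,s]}_1`. -/
def Phi1 (m s : ℂ) (τ z1 z2 t : ℂ) : ℂ :=
  Complex.exp (-(2 * Real.pi * Complex.I) * m * t) *
    ∑' j : ℤ,
      Complex.exp (2 * Real.pi * Complex.I * (m * (j : ℂ) * (z1 + z2) + s * z1)) *
          qpow τ (m * (j : ℂ) ^ 2 + s * (j : ℂ)) /
        (1 - e2 z1 * qpow τ (j : ℂ))

/-- The mock theta function `Φ^{[m,s]}_2`. -/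
def Phi2 (m s : ℂ) (τ z1 z2 t : ℂ) : ℂ :=
  Complex.exp (-(2 * Real.pi * Complex.I) * m * t) *
    ∑' j : ℤ,
      Complex.exp (-(2 * Real.pi * Complex.I) * (m * (j : ℂ) * (z1 + z2) + s * z2)) *
          qpow τ (m * (j : ℂ) ^ 2 + s * (j : ℂ)) /
        (1 - e2 (-z2) * qpow τ (j : ℂ))

/-- `Φ^{[m,s]} = Φ^{[m,s]}_1 - Φ^{[m,s]}_2`. -/
def Phi (m s : ℂ) (τ z1 z2 t : ℂ) : ℂ :=
  Phi1 m s τ z1 z2 t - Phi2 m s τ z1 z2 t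

/-- Jacobi's theta function `θ_{k,m}`. -/
def jTheta (k m : ℂ) (τ z : ℂ) : ℂ :=
  ∑' j : ℤ,
    Complex.exp (2 * Real.pi * Complex.I * (m * ((j : ℂ) + k / (2 * m)) * z)) *
      qpow τ (m * ((j : ℂ) + k / (2 * m)) ^ 2)

/-- The signed theta function `θ^{(-)}_{k,m}`. -/
def jThetaM (k m : ℂ) (τ z : ℂ) : ℂ :=
  ∑' j : ℤ,
    (-1 : ℂ) ^ j *
      Complex.exp (2 * Real.pi * Complex.I * (m * ((j : ℂ) + k / (2 * m)) * z)) *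
      qpow τ (m * ((j : ℂ) + k / (2 * m)) ^ 2)

/-- The Dedekind eta function. -/
def eta (τ : ℂ) : ℂ := qpow τ (1 / 24) * ∏' n : ℕ, (1 - qpow τ ((n : ℂ) + 1))

/-- The Mumford theta functions `ϑ_{ab}`. -/
def mumford (a b : ℕ) (τ z : ℂ) : ℂ :=
  ∑' n : ℤ,
    Complex.exp (Real.pi * Complex.I * τ * ((n : ℂ) + (a : ℂ) / 2) ^ 2 +
      2 * Real.pi * Complex.I * ((n : ℂ) + (a : ℂ) / 2) * (z + (b : ℂ) / 2))

/-- `z` lies in the lattice `ℤ + ℤτ`. -/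
def InLattice (τ z : ℂ) : Prop := ∃ a b : ℤ, z = (a : ℂ) + (b : ℂ) * τ

/-!
Write `w = z₁ - z₂` and `M = 2m`. The monomials `X_{J,n} y^i` with `y = e^{4πiz₁} q^{2(J+n)}` and
`X_{J,n} = q^{J² + J + Mn² + n} e^{2πi(Mn(z₁+z₂) + z₁)}` carry the whole identity. For fixed `n`
and `i` the alternating sum over `J` is zero, because `J ↦ -(2i+1) - J` reverses its sign; hence
so is the double sum over `J, n` of `(-1)^J ∑_{0 ≤ i < n} X_{J,n} y^i`. Now compare this with the
double sum of `(-1)^J ∑_{0 ≤ i < MJ} X_{J,n} y^i`. The difference is the double sum of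
`(-1)^J X_{J,n} (y^n - y^{MJ}) / (1 - y)`, in which `J + n` separates from `J` and from `n`: it is
an Appell–Lerch sum times a theta function, minus `Φ₁^{[m,1/2]}` times a theta function. On the
other hand, summing `X_{J,n} y^i` over `n` first gives a multiple of `θ_{2i+1,M}(τ, z₁+z₂)`.

Since `Φ₂` is `Φ₁` at `(-z₂, -z₁)`, subtracting two such identities yields `Φ^{[m,1/2]}` and the
functions `θ_{k,M} - θ_{-k,M}`, which are odd and `2M`-periodic in `k` and can therefore be sorted
by residues. Raising `s` by one changes `Φ₁` by a single theta function.

The Appell–Lerch sum equals `-i η(2τ)³ / ϑ₁₁(2τ, 2z)` by a limit of finite identities: the product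
of the `q`-binomial expansion of `(x;q²)_{2N+1}` and the partial fraction expansion of
`x^N / (x;q²)_{2N+1}` is `x^N`.
-/

section QSeries

variable {K : Type*} [Field K]

/-- The finite `q`-Pochhammer symbol `(y;Q)_n`. -/
def qPoch (Q y : K) (n : ℕ) : K := ∏ i ∈ Finset.range n, (1 - y * Q ^ i)

/-- The reciprocal `1 / (Q;Q)_n`. It is extended by `0` to `n < 0`, so that finite `q`-sums can be
written as sums over all of `ℤ`. -/
def invQPoch (Q : K) (n : ℤ) : K := if n < 0 then 0 else (qPoch Q Q n.toNat)⁻¹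

lemma qPoch_succ (Q y : K) (n : ℕ) : qPoch Q y (n + 1) = qPoch Q y n * (1 - y * Q ^ n) :=
  Finset.prod_range_succ _ n

lemma qPoch_succ_left (Q y : K) (n : ℕ) : qPoch Q y (n + 1) = (1 - y) * qPoch Q (y * Q) n := by
  rw [qPoch, Finset.prod_range_succ', mul_comm, pow_zero, mul_one]
  simp only [qPoch, pow_succ', mul_assoc]

lemma invQPoch_of_neg (Q : K) {n : ℤ} (hn : n < 0) : invQPoch Q n = 0 := if_pos hn

lemma invQPoch_natCast (Q : K) (n : ℕ) : invQPoch Q n = (qPoch Q Q n)⁻¹ := by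
  simp [invQPoch]

lemma one_sub_pow_ne_zero {Q : K} (hQ : ¬IsOfFinOrder Q) {n : ℕ} (hn : 0 < n) : 1 - Q ^ n ≠ 0 :=
  fun h => hQ (isOfFinOrder_iff_pow_eq_one.mpr ⟨n, hn, (sub_eq_zero.mp h).symm⟩)

lemma invQPoch_sub_one {Q : K} (hQ : ¬IsOfFinOrder Q) (n : ℤ) :
    invQPoch Q (n - 1) = (1 - Q ^ n) * invQPoch Q n := by
  rcases lt_trichotomy n 0 with h | rfl | h
  · rw [invQPoch_of_neg Q h, invQPoch_of_neg Q (by lia), mul_zero]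
  · rw [invQPoch_of_neg Q (by lia), zpow_zero, sub_self, zero_mul]
  · obtain ⟨k, rfl⟩ : ∃ k : ℕ, n = (k + 1 : ℕ) := ⟨(n - 1).toNat, by lia⟩
    have hk : 1 - Q ^ (k + 1) ≠ 0 := one_sub_pow_ne_zero hQ k.succ_pos
    rw [show ((k + 1 : ℕ) : ℤ) - 1 = k by lia, invQPoch_natCast, invQPoch_natCast, qPoch_succ,
      ← pow_succ', mul_inv, zpow_natCast]
    field_simp

lemma invQPoch_pascal_left {Q : K} (hQ0 : Q ≠ 0) (hQ : ¬IsOfFinOrder Q) (L k : ℤ) :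
    (1 - Q ^ (L + 1)) * (invQPoch Q k * invQPoch Q (L + 1 - k)) =
      Q ^ k * (invQPoch Q k * invQPoch Q (L - k)) +
        invQPoch Q (k - 1) * invQPoch Q (L + 1 - k) := by
  have hL := invQPoch_sub_one hQ (L + 1 - k)
  have hpow : Q ^ k * Q ^ (L + 1 - k) = Q ^ (L + 1) := by rw [← zpow_add₀ hQ0]; ring_nf
  rw [show L + 1 - k - 1 = L - k by ring] at hL
  rw [hL, invQPoch_sub_one hQ k, ← hpow]
  ring

lemma invQPoch_pascal_right {Q : K} (hQ0 : Q ≠ 0) (hQ : ¬IsOfFinOrder Q) (L k : ℤ) :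
    (1 - Q ^ (L + 1)) * (invQPoch Q k * invQPoch Q (L + 1 - k)) =
      invQPoch Q k * invQPoch Q (L - k) +
        Q ^ (L + 1 - k) * (invQPoch Q (k - 1) * invQPoch Q (L + 1 - k)) := by
  have h := invQPoch_pascal_left hQ0 hQ L (L + 1 - k)
  rw [show L + 1 - (L + 1 - k) = k by ring, show L - (L + 1 - k) = k - 1 by ring,
    show L + 1 - k - 1 = L - k by ring] at h
  linear_combination h

lemma neg_one_zpow_sub_one (n : ℤ) : (-1 : K) ^ (n - 1) = -(-1) ^ n := by
  rw [zpow_sub_one₀ (neg_ne_zero.mpr one_ne_zero), inv_neg_one, mul_neg_one]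

lemma sq_zpow (q : K) (n : ℤ) : (q ^ 2) ^ n = q ^ (2 * n) := by
  rw [← zpow_natCast q 2, ← zpow_mul]; rfl

/-- The `n`-th term of the partial fraction expansion of `y^p / (y;q²)_{L+1}`. -/
def partialFractionTerm (q y : K) (L p n : ℤ) : K :=
  (-1) ^ n * q ^ (n * (n + 1) - 2 * n * p) * (1 - y * (q ^ 2) ^ n)⁻¹ *
    (invQPoch (q ^ 2) n * invQPoch (q ^ 2) (L - n))

lemma mul_sq_mul_sq_zpow_sub_one {q : K} (hq0 : q ≠ 0) (y : K) (n : ℤ) :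
    y * q ^ 2 * (q ^ 2) ^ (n - 1) = y * (q ^ 2) ^ n := by
  rw [mul_assoc, ← zpow_one_add₀ (pow_ne_zero 2 hq0), add_sub_cancel]

lemma partialFractionTerm_succ_zero {q : K} (hq0 : q ≠ 0) (hq : ¬IsOfFinOrder (q ^ 2)) (y : K)
    (L n : ℤ) :
    (1 - (q ^ 2) ^ (L + 1)) * partialFractionTerm q y (L + 1) 0 n =
      partialFractionTerm q y L 0 n -
        (q ^ 2) ^ (L + 1) * partialFractionTerm q (y * q ^ 2) L 0 (n - 1) := by
  have hpascal := invQPoch_pascal_right (pow_ne_zero 2 hq0) hq L n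
  have hpow : (q ^ 2) ^ (L + 1 - n) * q ^ (n * (n + 1) - 2 * n * 0) =
      (q ^ 2) ^ (L + 1) * q ^ ((n - 1) * (n - 1 + 1) - 2 * (n - 1) * 0) := by
    rw [sq_zpow, sq_zpow, ← zpow_add₀ hq0, ← zpow_add₀ hq0]; ring_nf
  simp only [partialFractionTerm, neg_one_zpow_sub_one, mul_sq_mul_sq_zpow_sub_one hq0,
    show L - (n - 1) = L + 1 - n by ring]
  linear_combination (-1) ^ n * (1 - y * (q ^ 2) ^ n)⁻¹ *
    (q ^ (n * (n + 1) - 2 * n * 0) * hpascal +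
      invQPoch (q ^ 2) (n - 1) * invQPoch (q ^ 2) (L + 1 - n) * hpow)

lemma partialFractionTerm_succ_succ {q : K} (hq0 : q ≠ 0) (hq : ¬IsOfFinOrder (q ^ 2)) (y : K)
    (L p n : ℤ) :
    (1 - (q ^ 2) ^ (L + 1)) * partialFractionTerm q y (L + 1) (p + 1) n =
      partialFractionTerm q y L p n -
        ((q ^ 2) ^ p)⁻¹ * partialFractionTerm q (y * q ^ 2) L p (n - 1) := by
  have hpascal := invQPoch_pascal_left (pow_ne_zero 2 hq0) hq L n
  have hpow : q ^ (n * (n + 1) - 2 * n * (p + 1)) * (q ^ 2) ^ n =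
      q ^ (n * (n + 1) - 2 * n * p) := by
    rw [sq_zpow, ← zpow_add₀ hq0]; ring_nf
  have hpow' : q ^ (n * (n + 1) - 2 * n * (p + 1)) =
      ((q ^ 2) ^ p)⁻¹ * q ^ ((n - 1) * (n - 1 + 1) - 2 * (n - 1) * p) := by
    rw [← zpow_neg, sq_zpow, ← zpow_add₀ hq0]; ring_nf
  simp only [partialFractionTerm, neg_one_zpow_sub_one, mul_sq_mul_sq_zpow_sub_one hq0,
    show L - (n - 1) = L + 1 - n by ring]
  linear_combination (-1) ^ n * (1 - y * (q ^ 2) ^ n)⁻¹ *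
    (q ^ (n * (n + 1) - 2 * n * (p + 1)) * hpascal +
      invQPoch (q ^ 2) n * invQPoch (q ^ 2) (L - n) * hpow +
      invQPoch (q ^ 2) (n - 1) * invQPoch (q ^ 2) (L + 1 - n) * hpow')

variable [TopologicalSpace K]

lemma hasSum_mul_invQPoch_mul_invQPoch_neg (Q : K) (f : ℤ → K) :
    HasSum (fun k : ℤ => f k * (invQPoch Q k * invQPoch Q (0 - k))) (f 0) := by
  convert hasSum_single (0 : ℤ) fun k hk => ?_ using 1
  · simp [invQPoch, qPoch]
  · rcases lt_or_gt_of_ne hk with h | h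
    · rw [invQPoch_of_neg Q h, zero_mul, mul_zero]
    · rw [invQPoch_of_neg Q (by lia : 0 - k < 0), mul_zero, mul_zero]

variable [IsTopologicalRing K] {q : K}

lemma hasSum_of_mul_eq_sub_shift {f g h : ℤ → K} {a b c d : K} (hd : d ≠ 0) (hf : HasSum f a)
    (hg : HasSum g b) (hfg : ∀ n, d * h n = f n - c * g (n - 1)) : HasSum h ((a - c * b) / d) := by
  have hg' := ((Equiv.subRight (1 : ℤ)).hasSum_iff.mpr hg).mul_left c
  refine ((hf.sub hg').div_const d).congr_fun fun n => ?_
  rw [eq_div_iff hd, mul_comm, hfg]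
  rfl

/-- Splitting off the first factor, `y ↦ y q²`, turns the induction step into a Pascal rule. -/
lemma hasSum_qBinomial (hq0 : q ≠ 0) (hq : ¬IsOfFinOrder (q ^ 2)) (L : ℕ) {y : K} (hy : y ≠ 0) :
    HasSum (fun k : ℤ => (-1) ^ k * q ^ (k * (k - 1)) * y ^ k *
        (invQPoch (q ^ 2) k * invQPoch (q ^ 2) (L - k)))
      (invQPoch (q ^ 2) L * qPoch (q ^ 2) y L) := by
  induction L generalizing y with
  | zero =>
    have h := hasSum_mul_invQPoch_mul_invQPoch_neg (q ^ 2)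
      fun k => (-1) ^ k * q ^ (k * (k - 1)) * y ^ k
    simpa [invQPoch, qPoch] using h
  | succ L ih =>
    have hL : 1 - (q ^ 2) ^ ((L : ℤ) + 1) ≠ 0 := by
      exact_mod_cast one_sub_pow_ne_zero hq L.succ_pos
    have hsum := ih (mul_ne_zero hy (pow_ne_zero 2 hq0))
    convert hasSum_of_mul_eq_sub_shift (c := y) hL hsum hsum fun k => ?_ using 1
    · have hpoch := invQPoch_sub_one hq (L + 1)
      rw [add_sub_cancel_right] at hpoch
      rw [qPoch_succ_left, hpoch, Nat.cast_succ]
      field_simp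
    · have hpascal := invQPoch_pascal_left (pow_ne_zero 2 hq0) hq L k
      have hyk : y * (y * q ^ 2) ^ (k - 1) * q ^ ((k - 1) * (k - 1 - 1)) =
          y ^ k * q ^ (k * (k - 1)) := by
        rw [mul_zpow, ← mul_assoc, mul_comm y, zpow_sub_one₀ hy, inv_mul_cancel_right₀ hy,
          mul_assoc, sq_zpow, ← zpow_add₀ hq0]
        ring_nf
      rw [mul_zpow, neg_one_zpow_sub_one, Nat.cast_succ,
        show (L : ℤ) - (k - 1) = L + 1 - k by ring]
      linear_combination (-1) ^ k * q ^ (k * (k - 1)) * y ^ k * hpascal -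
        (-1) ^ k * invQPoch (q ^ 2) (k - 1) * invQPoch (q ^ 2) (L + 1 - k) * hyk

lemma hasSum_partialFraction (hq0 : q ≠ 0) (hq : ¬IsOfFinOrder (q ^ 2)) {L p : ℕ} (hp : p ≤ L)
    {y : K} (hy : ∀ i : ℕ, 1 - y * (q ^ 2) ^ i ≠ 0) :
    HasSum (partialFractionTerm q y L p) (y ^ p / qPoch (q ^ 2) y (L + 1)) := by
  induction L generalizing p y with
  | zero =>
    obtain rfl : p = 0 := by lia
    have h := hasSum_mul_invQPoch_mul_invQPoch_neg (q ^ 2)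
      fun n => (-1) ^ n * q ^ (n * (n + 1) - 2 * n * 0) * (1 - y * (q ^ 2) ^ n)⁻¹
    simpa [qPoch] using h.congr_fun (g := partialFractionTerm q y 0 0) fun n => rfl
  | succ L ih =>
    have hL : 1 - (q ^ 2) ^ (L + 1) ≠ 0 := one_sub_pow_ne_zero hq L.succ_pos
    have hy' (i : ℕ) : 1 - y * q ^ 2 * (q ^ 2) ^ i ≠ 0 := by
      rw [mul_assoc, ← pow_succ']; exact hy (i + 1)
    have hX : qPoch (q ^ 2) (y * q ^ 2) L ≠ 0 := Finset.prod_ne_zero_iff.mpr fun i _ => hy' i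
    have hy0 : 1 - y ≠ 0 := by simpa using hy 0
    have hyL : 1 - y * q ^ 2 * (q ^ 2) ^ L ≠ 0 := hy' L
    rcases p with _ | p
    · rw [Nat.cast_zero]
      convert hasSum_of_mul_eq_sub_shift hL (ih L.zero_le hy) (ih L.zero_le hy') fun n =>
        mod_cast partialFractionTerm_succ_zero hq0 hq y L n using 1
      rw [qPoch_succ_left _ y (L + 1), qPoch_succ_left _ y L, qPoch_succ]
      field_simp
      ring
    · have hp := Nat.le_of_succ_le_succ hp
      convert hasSum_of_mul_eq_sub_shift hL (ih hp hy) (ih hp hy') fun n =>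
        mod_cast partialFractionTerm_succ_succ hq0 hq y L p n using 1
      rw [qPoch_succ_left _ y (L + 1), qPoch_succ_left _ y L, qPoch_succ]
      field_simp
      ring

lemma tsum_qBinomial_centred [T2Space K] (hq0 : q ≠ 0) (hq : ¬IsOfFinOrder (q ^ 2)) {x : K}
    (hx : x ≠ 0) (N : ℕ) :
    (-1) ^ (N : ℤ) * x ^ (N : ℤ) * q ^ (-(N * (N + 1)) : ℤ) * (∑' l : ℤ, (-1) ^ l *
      q ^ (l * (l - 1)) * x ^ l * (invQPoch (q ^ 2) (N + l) * invQPoch (q ^ 2) (N + 1 - l))) =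
      invQPoch (q ^ 2) (2 * N + 1) * qPoch (q ^ 2) (x * (q ^ 2) ^ (-N : ℤ)) (2 * N + 1) := by
  have hy : x * (q ^ 2) ^ (-N : ℤ) ≠ 0 := mul_ne_zero hx (zpow_ne_zero _ (pow_ne_zero 2 hq0))
  have h := (Equiv.addRight (N : ℤ)).hasSum_iff.mpr (hasSum_qBinomial hq0 hq (2 * N + 1) hy)
  push_cast at h
  rw [← tsum_mul_left, ← h.tsum_eq]
  refine tsum_congr fun l => ?_
  have hpow : q ^ ((l + N) * (l + N - 1)) * (x * (q ^ 2) ^ (-N : ℤ)) ^ (l + N) =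
      q ^ (-(N * (N + 1)) : ℤ) * q ^ (l * (l - 1)) * x ^ (l + N) := by
    rw [mul_zpow, ← zpow_mul, sq_zpow, mul_left_comm, ← zpow_add₀ hq0, ← zpow_add₀ hq0, mul_comm]
    ring_nf
  simp only [Function.comp, Equiv.coe_addRight]
  rw [mul_assoc ((-1) ^ (l + N)), hpow, zpow_add₀ (by simp), zpow_add₀ hx, add_comm l,
    show (2 : ℤ) * N + 1 - (N + l) = N + 1 - l by ring]
  ring

lemma tsum_partialFraction_centred [T2Space K] (hq0 : q ≠ 0) (hq : ¬IsOfFinOrder (q ^ 2)) {x : K}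
    (hxq : ∀ n : ℤ, 1 - x * (q ^ 2) ^ n ≠ 0) (N : ℕ) :
    (-1) ^ (N : ℤ) * q ^ (-(N * (N - 1)) : ℤ) * (∑' n : ℤ, (-1) ^ n * q ^ (n * (n + 1)) *
      (1 - x * (q ^ 2) ^ n)⁻¹ * (invQPoch (q ^ 2) (N + n) * invQPoch (q ^ 2) (N - n))) =
      (x * (q ^ 2) ^ (-N : ℤ)) ^ (N : ℤ) /
        qPoch (q ^ 2) (x * (q ^ 2) ^ (-N : ℤ)) (2 * N + 1) := by
  have hy (n : ℤ) : x * (q ^ 2) ^ (-N : ℤ) * (q ^ 2) ^ n = x * (q ^ 2) ^ (n - N) := by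
    rw [mul_assoc, ← zpow_add₀ (pow_ne_zero 2 hq0), neg_add_eq_sub]
  have h := (Equiv.addRight (N : ℤ)).hasSum_iff.mpr (hasSum_partialFraction hq0 hq
    (show N ≤ 2 * N by lia) (y := x * (q ^ 2) ^ (-N : ℤ)) fun i => by
      rw [← zpow_natCast (q ^ 2) i, hy]; exact hxq _)
  rw [← tsum_mul_left, zpow_natCast (x * _), ← h.tsum_eq]
  refine tsum_congr fun n => ?_
  have hpow : q ^ ((n + N) * (n + N + 1) - 2 * (n + N) * N) =
      q ^ (-(N * (N - 1)) : ℤ) * q ^ (n * (n + 1)) := by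
    rw [← zpow_add₀ hq0]; ring_nf
  simp only [Function.comp, Equiv.coe_addRight, partialFractionTerm]
  rw [hpow, hy, add_sub_cancel_right, zpow_add₀ (by simp), add_comm n (N : ℤ), Nat.cast_mul,
    Nat.cast_two,
    show (2 : ℤ) * N - (N + n) = N - n by ring]
  ring

/-- With `y = x q^{-2N}`, the product `(y;q²)_{2N+1}` cancels between the `q`-binomial theorem and
the partial fraction expansion. -/
lemma tsum_mul_tsum_eq_invQPoch [T2Space K] (hq0 : q ≠ 0) (hq : ¬IsOfFinOrder (q ^ 2)) {x : K}
    (hx : x ≠ 0) (hxq : ∀ n : ℤ, 1 - x * (q ^ 2) ^ n ≠ 0) (N : ℕ) :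
    (∑' l : ℤ, (-1) ^ l * q ^ (l * (l - 1)) * x ^ l *
        (invQPoch (q ^ 2) (N + l) * invQPoch (q ^ 2) (N + 1 - l))) *
      (∑' n : ℤ, (-1) ^ n * q ^ (n * (n + 1)) * (1 - x * (q ^ 2) ^ n)⁻¹ *
        (invQPoch (q ^ 2) (N + n) * invQPoch (q ^ 2) (N - n))) =
      invQPoch (q ^ 2) (2 * N + 1) := by
  have hQ0 : q ^ 2 ≠ 0 := pow_ne_zero 2 hq0
  have hS := tsum_qBinomial_centred hq0 hq hx N
  have hA := tsum_partialFraction_centred hq0 hq hxq N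
  set y := x * (q ^ 2) ^ (-N : ℤ) with hy
  have hW : qPoch (q ^ 2) y (2 * N + 1) ≠ 0 := Finset.prod_ne_zero_iff.mpr fun i _ => by
    rw [hy, mul_assoc, ← zpow_natCast (q ^ 2) i, ← zpow_add₀ hQ0]; exact hxq _
  have hyN : y ^ (N : ℤ) = (-1) ^ (N : ℤ) * x ^ (N : ℤ) * q ^ (-(N * (N + 1)) : ℤ) *
      ((-1) ^ (N : ℤ) * q ^ (-(N * (N - 1)) : ℤ)) := by
    have hsign : (-1 : K) ^ (N : ℤ) * (-1) ^ (N : ℤ) = 1 := by rw [← mul_zpow]; simp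
    have hpow : (q ^ 2) ^ (-N * N : ℤ) = q ^ (-(N * (N + 1)) : ℤ) * q ^ (-(N * (N - 1)) : ℤ) := by
      rw [sq_zpow, ← zpow_add₀ hq0]; ring_nf
    rw [hy, mul_zpow, ← zpow_mul, hpow]
    linear_combination -x ^ (N : ℤ) * q ^ (-(N * (N + 1)) : ℤ) * q ^ (-(N * (N - 1)) : ℤ) * hsign
  refine mul_left_cancel₀ (zpow_ne_zero N (mul_ne_zero hx (zpow_ne_zero (-N : ℤ) hQ0))) ?_
  calc y ^ (N : ℤ) * _ = _ := by rw [hyN, mul_mul_mul_comm]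
    _ = _ := by rw [hS, hA, ← hy]; field_simp

end QSeries

section Limit

open Filter Topology

lemma tendsto_tsum_mul_of_bounded {ι : Type*} {f : ι → ℂ} (hf : Summable f) {c : ℕ → ι → ℂ}
    {C : ℝ} (hC : ∀ N i, ‖c N i‖ ≤ C) {a : ℂ} (hc : ∀ i, Tendsto (c · i) atTop (𝓝 a)) :
    Tendsto (fun N => ∑' i, f i * c N i) atTop (𝓝 ((∑' i, f i) * a)) := by
  rw [← tsum_mul_right]
  refine tendsto_tsum_of_dominated_convergence (hf.norm.mul_right C) (fun i => (hc i).const_mul _)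
    (Eventually.of_forall fun N i => ?_)
  rw [norm_mul]
  exact mul_le_mul_of_nonneg_left (hC N i) (norm_nonneg _)

lemma not_isOfFinOrder_of_norm_lt_one {Q : ℂ} (hQ : ‖Q‖ < 1) : ¬IsOfFinOrder Q :=
  fun h => hQ.ne h.norm_eq_one

lemma tprod_one_sub_pow_ne_zero {Q : ℂ} (hQ : ‖Q‖ < 1) : ∏' k : ℕ, (1 - Q ^ (k + 1)) ≠ 0 := by
  have hsum : Summable fun k : ℕ => ‖-Q ^ (k + 1)‖ := by
    simpa using (summable_nat_add_iff 1).mpr (summable_geometric_of_lt_one (norm_nonneg Q) hQ)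
  simpa only [← sub_eq_add_neg] using tprod_one_add_ne_zero_of_summable (fun k => by
    rw [← sub_eq_add_neg]
    exact one_sub_pow_ne_zero (not_isOfFinOrder_of_norm_lt_one hQ) k.succ_pos) hsum

lemma tendsto_invQPoch {Q : ℂ} (hQ : ‖Q‖ < 1) :
    Tendsto (invQPoch Q) atTop (𝓝 (∏' k : ℕ, (1 - Q ^ (k + 1)))⁻¹) := by
  have h := (ModularForm.multipliable_one_sub_pow hQ).hasProd.tendsto_prod_nat.inv₀
    (tprod_one_sub_pow_ne_zero hQ)
  have hnat : Tendsto Int.toNat atTop atTop :=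
    tendsto_atTop.mpr fun b => (eventually_ge_atTop (b : ℤ)).mono fun n hn => by lia
  refine (h.comp hnat).congr' ((eventually_ge_atTop 0).mono fun n hn => ?_)
  simp [invQPoch, qPoch, hn.not_gt, pow_succ']

lemma exists_norm_invQPoch_le {Q : ℂ} (hQ : ‖Q‖ < 1) : ∃ C, ∀ n, ‖invQPoch Q n‖ ≤ C := by
  have h := (tendsto_invQPoch hQ).norm.comp tendsto_natCast_atTop_atTop
  obtain ⟨C, hC⟩ := h.bddAbove_range
  refine ⟨C, fun n => ?_⟩
  rcases lt_or_ge n 0 with hn | hn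
  · rw [invQPoch_of_neg Q hn, norm_zero]
    exact (norm_nonneg _).trans (hC ⟨0, rfl⟩)
  · exact hC ⟨n.toNat, by simp [hn]⟩

lemma tsum_mul_tsum_eq_tprod_pow_three {q x : ℂ} (hq0 : q ≠ 0) (hq : ‖q‖ < 1) (hx : x ≠ 0)
    (hxq : ∀ n : ℤ, 1 - x * (q ^ 2) ^ n ≠ 0)
    (hS : Summable fun l : ℤ => (-1) ^ l * q ^ (l * (l - 1)) * x ^ l)
    (hA : Summable fun n : ℤ => (-1) ^ n * q ^ (n * (n + 1)) * (1 - x * (q ^ 2) ^ n)⁻¹) :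
    (∑' l : ℤ, (-1) ^ l * q ^ (l * (l - 1)) * x ^ l) *
      (∑' n : ℤ, (-1) ^ n * q ^ (n * (n + 1)) * (1 - x * (q ^ 2) ^ n)⁻¹) =
      (∏' k : ℕ, (1 - (q ^ 2) ^ (k + 1))) ^ 3 := by
  have hQ : ‖q ^ 2‖ < 1 := by
    rw [norm_pow]; exact pow_lt_one₀ (norm_nonneg _) hq two_ne_zero
  have hP := tprod_one_sub_pow_ne_zero hQ
  set P := ∏' k : ℕ, (1 - (q ^ 2) ^ (k + 1))
  obtain ⟨C, hC⟩ := exists_norm_invQPoch_le hQ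
  have hbound (a b : ℤ) : ‖invQPoch (q ^ 2) a * invQPoch (q ^ 2) b‖ ≤ C * C := by
    rw [norm_mul]
    exact mul_le_mul (hC a) (hC b) (norm_nonneg _) ((norm_nonneg _).trans (hC 0))
  have hlim {f : ℕ → ℤ} (hf : Tendsto f atTop atTop) :
      Tendsto (fun N => invQPoch (q ^ 2) (f N)) atTop (𝓝 P⁻¹) := (tendsto_invQPoch hQ).comp hf
  have hN : Tendsto (Nat.cast : ℕ → ℤ) atTop atTop := tendsto_natCast_atTop_atTop
  have hadd (c : ℤ) : Tendsto (fun N : ℕ => (N : ℤ) + c) atTop atTop :=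
    tendsto_atTop_add_const_right _ c hN
  have hS' := tendsto_tsum_mul_of_bounded hS (fun N l => hbound (N + l) (N + 1 - l))
    fun l => (hlim (hadd l)).mul (hlim (by simpa only [add_sub_assoc] using hadd (1 - l)))
  have hA' := tendsto_tsum_mul_of_bounded hA (fun N n => hbound (N + n) (N - n))
    fun n => (hlim (hadd n)).mul (hlim (hadd (-n)))
  have hprod := (hS'.mul hA').congr fun N => tsum_mul_tsum_eq_invQPoch hq0
    (not_isOfFinOrder_of_norm_lt_one hQ) hx hxq N
  have := tendsto_nhds_unique hprod
    (hlim (f := fun N => 2 * N + 1) (tendsto_atTop_mono (fun N => by lia) hN))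
  field_simp at this
  simpa only [div_eq_mul_inv] using this

end Limit

lemma e2_add (a b : ℂ) : e2 (a + b) = e2 a * e2 b := by
  rw [e2, mul_add, Complex.exp_add, e2, e2]

lemma e2_ne_zero (a : ℂ) : e2 a ≠ 0 := Complex.exp_ne_zero _

lemma e2_neg (a : ℂ) : e2 (-a) = (e2 a)⁻¹ := by
  rw [e2, mul_neg, Complex.exp_neg, e2]

lemma e2_zpow (a : ℂ) (n : ℤ) : e2 a ^ n = e2 (n * a) := by
  rw [e2, e2, ← Complex.exp_int_mul, mul_left_comm]

lemma e2_pow (a : ℂ) (n : ℕ) : e2 a ^ n = e2 (n * a) := mod_cast e2_zpow a n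

lemma qpow_eq_e2 (τ x : ℂ) : qpow τ x = e2 (τ * x) := by
  rw [qpow, e2, mul_assoc _ τ]

lemma e2_intCast_div_two (n : ℤ) : e2 (n / 2) = (-1) ^ n := by
  have h : e2 (1 / 2) = -1 := by
    rw [e2, ← Complex.exp_pi_mul_I]; ring_nf
  rw [← h, e2_zpow, mul_one_div]

lemma e2_intCast (n : ℤ) : e2 n = 1 := by
  rw [e2, mul_comm, Complex.exp_int_mul_two_pi_mul_I]

lemma norm_e2 (w : ℂ) : ‖e2 w‖ = Real.exp (-(2 * Real.pi * w.im)) := by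
  rw [e2, Complex.norm_exp]
  simp

lemma norm_e2_lt_one {τ : ℂ} (hτ : 0 < τ.im) : ‖e2 τ‖ < 1 := by
  rw [norm_e2, Real.exp_lt_one_iff, neg_neg_iff_pos]
  positivity

lemma im_mul_natCast_pos {τ : ℂ} (hτ : 0 < τ.im) {M : ℕ} (hM : 0 < M) : 0 < (τ * M).im := by
  simpa using mul_pos hτ (Nat.cast_pos.mpr hM)

lemma im_mul_natCast_div_two_pos {τ : ℂ} (hτ : 0 < τ.im) {M : ℕ} (hM : 0 < M) :
    0 < (τ * (M / 2)).im := by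
  simpa [← mul_div_assoc] using im_mul_natCast_pos hτ hM

lemma summable_abs_pow_mul_norm_e2 {α : ℂ} (hα : 0 < α.im) (β γ : ℂ) (k : ℕ) :
    Summable fun n : ℤ => |(n : ℝ)| ^ k * ‖e2 (α * n ^ 2 + β * n + γ)‖ := by
  have h := (summable_pow_mul_jacobiTheta₂_term_bound |β.im| (T := 2 * α.im)
    (by linarith) k).mul_right (Real.exp (-(2 * Real.pi * γ.im)))
  refine h.of_nonneg_of_le (fun n => by positivity) fun n => ?_
  rw [mul_assoc, Int.cast_abs]
  refine mul_le_mul_of_nonneg_left ?_ (by positivity)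
  have him : (α * n ^ 2 + β * n + γ).im = α.im * (n : ℝ) ^ 2 + β.im * n + γ.im := by
    simp [sq]
  rw [norm_e2, ← Real.exp_add, Real.exp_le_exp, him]
  have hβ : -(|β.im| * |(n : ℝ)|) ≤ β.im * n := by
    rw [← abs_mul]; exact neg_abs_le _
  nlinarith [Real.pi_pos, mul_le_mul_of_nonneg_left hβ Real.pi_pos.le]

lemma summable_e2_quadratic {α : ℂ} (hα : 0 < α.im) (β γ : ℂ) :
    Summable fun n : ℤ => e2 (α * n ^ 2 + β * n + γ) :=
  .of_norm (by simpa using summable_abs_pow_mul_norm_e2 hα β γ 0)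

section Appell

open Filter Topology

lemma exists_norm_inv_one_sub_mul_zpow_le {Q x : ℂ} (hQ0 : Q ≠ 0) (hQ : ‖Q‖ < 1) (hx : x ≠ 0) :
    ∃ C, ∀ n : ℤ, ‖(1 - x * Q ^ n)⁻¹‖ ≤ C := by
  have h0 := tendsto_pow_atTop_nhds_zero_of_norm_lt_one hQ
  have hpos : Tendsto (fun n : ℕ => ‖(1 - x * Q ^ (n : ℤ))⁻¹‖) atTop (𝓝 ‖(1 - x * 0)⁻¹‖) :=
    (((h0.const_mul x).const_sub 1).inv₀ (by simp)).norm.congr fun n => by rw [zpow_natCast]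
  have hneg : Tendsto (fun n : ℕ => ‖(1 - x * Q ^ (-n : ℤ))⁻¹‖) atTop (𝓝 ‖0 * (0 - x)⁻¹‖) := by
    refine (h0.mul ((h0.sub_const x).inv₀ (by simpa using hx))).norm.congr fun n => ?_
    have hn : Q ^ n ≠ 0 := pow_ne_zero n hQ0
    rw [zpow_neg, zpow_natCast, show 1 - x * (Q ^ n)⁻¹ = (Q ^ n)⁻¹ * (Q ^ n - x) by field_simp,
      mul_inv, inv_inv]
  obtain ⟨C₁, h₁⟩ := hpos.bddAbove_range
  obtain ⟨C₂, h₂⟩ := hneg.bddAbove_range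
  refine ⟨max C₁ C₂, fun n => ?_⟩
  obtain ⟨k, rfl | rfl⟩ := n.eq_nat_or_neg
  · exact le_max_of_le_left (h₁ ⟨k, rfl⟩)
  · exact le_max_of_le_right (h₂ ⟨k, rfl⟩)

lemma e2_mul_sq_zpow (τ z : ℂ) (n : ℤ) : e2 (2 * z) * (e2 τ ^ 2) ^ n = e2 (2 * z + 2 * τ * n) := by
  rw [sq_zpow, e2_zpow, ← e2_add]
  congr 1; push_cast; ring

lemma exists_norm_inv_one_sub_e2_le {τ : ℂ} (hτ : 0 < τ.im) (z : ℂ) :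
    ∃ C, ∀ n : ℤ, ‖(1 - e2 (2 * z + 2 * τ * n))⁻¹‖ ≤ C := by
  simp only [← e2_mul_sq_zpow]
  refine exists_norm_inv_one_sub_mul_zpow_le (pow_ne_zero 2 (e2_ne_zero τ)) ?_ (e2_ne_zero _)
  rw [norm_pow]
  exact pow_lt_one₀ (norm_nonneg _) (norm_e2_lt_one hτ) two_ne_zero

lemma summable_e2_quadratic_div {τ α : ℂ} (hτ : 0 < τ.im) (hα : 0 < α.im) (z β γ : ℂ) :
    Summable fun n : ℤ => e2 (α * n ^ 2 + β * n + γ) / (1 - e2 (2 * z + 2 * τ * n)) := by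
  obtain ⟨C, hC⟩ := exists_norm_inv_one_sub_e2_le hτ z
  refine .of_norm_bounded ((summable_e2_quadratic hα β γ).norm.mul_right C) fun n => ?_
  rw [div_eq_mul_inv, norm_mul]
  exact mul_le_mul_of_nonneg_left (hC n) (norm_nonneg _)

/-- The Appell–Lerch sum `∑ (-1)^n q^{n(n+1)} e^{2πiz} / (1 - e^{4πiz} q^{2n})`, the partial
fraction expansion of `-i η(2τ)³ / ϑ₁₁(2τ, 2z)`. -/
def appellSum (τ z : ℂ) : ℂ :=
  ∑' n : ℤ, (-1) ^ n * (e2 (τ * (n * (n + 1)) + z) / (1 - e2 (2 * z + 2 * τ * n)))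

lemma hasSum_appellSum {τ : ℂ} (hτ : 0 < τ.im) (z : ℂ) :
    HasSum (fun n : ℤ => (-1) ^ n * (e2 (τ * (n * (n + 1)) + z) / (1 - e2 (2 * z + 2 * τ * n))))
      (appellSum τ z) := by
  refine ((summable_e2_quadratic_div hτ hτ z (τ + 1 / 2) z).congr fun n => ?_).hasSum
  rw [← mul_div_assoc, ← e2_intCast_div_two, ← e2_add]
  congr 2; ring

lemma eta_two_mul_pow_three (τ : ℂ) :
    eta (2 * τ) ^ 3 = e2 (τ / 4) * (∏' k : ℕ, (1 - (e2 τ ^ 2) ^ (k + 1))) ^ 3 := by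
  rw [eta, mul_pow, qpow_eq_e2, e2_pow]
  congr 2
  · push_cast; ring
  · refine tprod_congr fun k => ?_
    rw [qpow_eq_e2, ← pow_mul, e2_pow]
    congr 2; push_cast; ring

lemma mumford_one_one_two_mul (τ z : ℂ) :
    mumford 1 1 (2 * τ) (2 * z) = -I * e2 (τ / 4) * e2 (-z) *
      ∑' l : ℤ, (-1) ^ l * e2 τ ^ (l * (l - 1)) * e2 (2 * z) ^ l := by
  have hI : -I = e2 (-(1 / 4)) := by
    rw [e2_neg, e2, show 2 * Real.pi * I * (1 / 4) = Real.pi / 2 * I by ring,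
      Complex.exp_pi_div_two_mul_I, inv_I]
  rw [mumford, ← tsum_mul_left, ← (Equiv.addRight (-1 : ℤ)).tsum_eq]
  refine tsum_congr fun n => ?_
  rw [hI, ← e2_intCast_div_two, e2_zpow, e2_zpow]
  simp only [← e2_add, Equiv.coe_addRight]
  rw [e2]
  congr 1; push_cast; ring

lemma appellSum_eq (τ z : ℂ) :
    appellSum τ z = e2 z *
      ∑' n : ℤ, (-1) ^ n * e2 τ ^ (n * (n + 1)) * (1 - e2 (2 * z) * (e2 τ ^ 2) ^ n)⁻¹ := by
  rw [appellSum, ← tsum_mul_left]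
  refine tsum_congr fun n => ?_
  rw [e2_mul_sq_zpow, e2_zpow, e2_add, mul_comm τ]
  push_cast
  ring

lemma neg_I_mul_eta_pow_three_div_mumford {τ : ℂ} (hτ : 0 < τ.im) (z : ℂ)
    (hz : ∀ n : ℤ, 1 - e2 (2 * z + 2 * τ * n) ≠ 0) :
    -I * eta (2 * τ) ^ 3 / mumford 1 1 (2 * τ) (2 * z) = appellSum τ z := by
  have hS : Summable fun l : ℤ => (-1) ^ l * e2 τ ^ (l * (l - 1)) * e2 (2 * z) ^ l := by
    refine (summable_e2_quadratic hτ (-τ + 2 * z + 1 / 2) 0).congr fun l => ?_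
    rw [← e2_intCast_div_two, e2_zpow, e2_zpow, ← e2_add, ← e2_add]
    congr 1; push_cast; ring
  have hA : Summable fun n : ℤ => (-1) ^ n * e2 τ ^ (n * (n + 1)) *
      (1 - e2 (2 * z) * (e2 τ ^ 2) ^ n)⁻¹ := by
    refine (summable_e2_quadratic_div hτ hτ z (τ + 1 / 2) 0).congr fun n => ?_
    rw [e2_mul_sq_zpow, ← e2_intCast_div_two, e2_zpow, ← e2_add, div_eq_mul_inv]
    congr 2; push_cast; ring
  have hSA := tsum_mul_tsum_eq_tprod_pow_three (e2_ne_zero τ) (norm_e2_lt_one hτ) (e2_ne_zero _)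
    (fun n => by rw [e2_mul_sq_zpow]; exact hz n) hS hA
  have hP : (∏' k : ℕ, (1 - (e2 τ ^ 2) ^ (k + 1))) ^ 3 ≠ 0 :=
    pow_ne_zero 3 (tprod_one_sub_pow_ne_zero (by
      rw [norm_pow]; exact pow_lt_one₀ (norm_nonneg _) (norm_e2_lt_one hτ) two_ne_zero))
  rw [← hSA] at hP
  rw [mumford_one_one_two_mul, eta_two_mul_pow_three, ← hSA, appellSum_eq, e2_neg]
  have hS0 := left_ne_zero_of_mul hP
  have hz0 := e2_ne_zero z
  have hτ0 := e2_ne_zero (τ / 4)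
  have hI0 := I_ne_zero
  set S := ∑' l : ℤ, (-1 : ℂ) ^ l * e2 τ ^ (l * (l - 1)) * e2 (2 * z) ^ l
  field_simp

end Appell

section SignedSum

/-- The sum `∑_{0 ≤ i < n} f i` oriented like an integral: it is `-∑_{n ≤ i < 0} f i` for
negative `n`. -/
def signedSum {E : Type*} [AddCommGroup E] (n : ℤ) (f : ℤ → E) : E :=
  ∑ i ∈ Finset.Ico 0 n, f i - ∑ i ∈ Finset.Ico n 0, f i

lemma signedSum_zero {E : Type*} [AddCommGroup E] (f : ℤ → E) : signedSum 0 f = 0 := by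
  simp [signedSum]

lemma signedSum_natCast {E : Type*} [AddCommGroup E] (n : ℕ) (f : ℤ → E) :
    signedSum n f = ∑ i ∈ Finset.range n, f i := by
  rw [signedSum, Finset.Ico_eq_empty (by lia : ¬(n : ℤ) < 0), Finset.sum_empty, sub_zero]
  simp [Int.Ico_eq_finset_map]

lemma signedSum_neg_natCast {E : Type*} [AddCommGroup E] (n : ℕ) (f : ℤ → E) :
    signedSum (-n) f = -∑ i ∈ Finset.range n, f (-1 - i) := by
  rw [signedSum, Finset.Ico_eq_empty (by lia : ¬0 < -(n : ℤ)), Finset.sum_empty, zero_sub]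
  congr 1
  refine Finset.sum_nbij' (fun i => (-1 - i).toNat) (fun i => -1 - i) ?_ ?_ ?_ ?_ ?_ <;>
    simp only [Finset.mem_Ico, Finset.mem_range] <;> intro i hi
  · lia
  · lia
  · lia
  · lia
  · congr 1; lia

lemma signedSum_eq_sub {E : Type*} [AddCommGroup E] {f G : ℤ → E} (h : ∀ i, G (i + 1) = G i + f i)
    (n : ℤ) : signedSum n f = G n - G 0 := by
  obtain ⟨n, rfl | rfl⟩ := n.eq_nat_or_neg
  · rw [signedSum_natCast, ← Nat.cast_zero, ← Finset.sum_range_sub (fun i : ℕ => G i)]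
    refine Finset.sum_congr rfl fun i _ => ?_
    rw [Nat.cast_add_one, h, add_sub_cancel_left]
  · rw [signedSum_neg_natCast, ← neg_sub, neg_inj]
    have := Finset.sum_range_sub' (fun i : ℕ => G (-i)) n
    rw [Nat.cast_zero, neg_zero] at this
    rw [← this]
    refine Finset.sum_congr rfl fun i _ => ?_
    have hi := h (-1 - i)
    rw [show -1 - (i : ℤ) + 1 = -i by ring] at hi
    rw [hi, show -((i + 1 : ℕ) : ℤ) = -1 - i by push_cast; ring, add_sub_cancel_left]

lemma signedSum_geom {K : Type*} [Field K] {u : K} (hu : u ≠ 0) (hu1 : 1 - u ≠ 0) (c : K) (n : ℤ) :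
    signedSum n (fun i => c * u ^ i) = c / (1 - u) - c * u ^ n / (1 - u) := by
  rw [signedSum_eq_sub (G := fun i => -(c * u ^ i / (1 - u)))]
  · rw [zpow_zero, mul_one]; ring
  · intro i
    rw [zpow_add_one₀ hu]; field_simp; ring

lemma norm_signedSum_le {E : Type*} [SeminormedAddCommGroup E] {n : ℤ} {f : ℤ → E} {B : ℝ}
    (h : ∀ i, 0 ≤ i ∧ i < n ∨ n ≤ i ∧ i < 0 → ‖f i‖ ≤ B) : ‖signedSum n f‖ ≤ |(n : ℝ)| * B := by
  obtain ⟨n, rfl | rfl⟩ := n.eq_nat_or_neg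
  · rw [signedSum_natCast]
    refine (norm_sum_le_of_le (Finset.range n) fun i hi => h i ?_).trans_eq (by simp)
    rw [Finset.mem_range] at hi
    lia
  · rw [signedSum_neg_natCast, norm_neg]
    refine (norm_sum_le_of_le (Finset.range n) fun i hi => h (-1 - i) ?_).trans_eq (by simp)
    rw [Finset.mem_range] at hi
    lia

lemma signedSum_sub {E : Type*} [AddCommGroup E] (n : ℤ) (f g : ℤ → E) :
    signedSum n (fun i => f i - g i) = signedSum n f - signedSum n g := by
  simp only [signedSum, Finset.sum_sub_distrib]
  abel

lemma hasSum_signedSum {ι E : Type*} [AddCommGroup E] [TopologicalSpace E] [IsTopologicalAddGroup E]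
    {f : ι → ℤ → E} {a : ℤ → E} (h : ∀ i, HasSum (fun x => f x i) (a i)) (n : ℤ) :
    HasSum (fun x => signedSum n (f x)) (signedSum n a) :=
  (hasSum_sum fun i _ => h i).sub (hasSum_sum fun i _ => h i)

end SignedSum

section Theta

lemma hasSum_jTheta {τ m : ℂ} (hm : 0 < (τ * m).im) (k z : ℂ) :
    HasSum (fun j : ℤ => e2 (τ * m * (j + k / (2 * m)) ^ 2 + m * (j + k / (2 * m)) * z))
      (jTheta k m τ z) := by
  have hs := summable_e2_quadratic hm (2 * τ * m * (k / (2 * m)) + m * z)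
    (τ * m * (k / (2 * m)) ^ 2 + m * (k / (2 * m)) * z)
  refine HasSum.congr_fun (Summable.hasSum (hs.congr fun j => ?_)) fun j => ?_
  · rw [← e2, qpow_eq_e2, ← e2_add]
    congr 1; ring
  · rw [← e2, qpow_eq_e2, ← e2_add]
    congr 1; ring

lemma hasSum_jThetaM_zero {τ m : ℂ} (hm : 0 < (τ * m).im) (z : ℂ) :
    HasSum (fun j : ℤ => (-1) ^ j * e2 (τ * m * j ^ 2 + m * z * j)) (jThetaM 0 m τ z) := by
  have hs := summable_e2_quadratic hm (m * z + 1 / 2) 0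
  refine HasSum.congr_fun (Summable.hasSum (hs.congr fun j => ?_)) fun j => ?_
  · rw [← e2, qpow_eq_e2, ← e2_intCast_div_two, ← e2_add, ← e2_add]
    congr 1; ring
  · rw [← e2, qpow_eq_e2, mul_assoc ((-1 : ℂ) ^ j), ← e2_add]
    congr 2; ring

lemma jTheta_neg (k m τ z : ℂ) : jTheta k m τ (-z) = jTheta (-k) m τ z := by
  rw [jTheta, jTheta, ← (Equiv.neg ℤ).tsum_eq]
  refine tsum_congr fun j => ?_
  congr 2 <;> (simp only [Equiv.neg_apply]; push_cast; ring)

lemma jTheta_two_mul_mul_add {m : ℂ} (hm : m ≠ 0) (k τ z : ℂ) (r : ℤ) :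
    jTheta (2 * m * r + k) m τ z = jTheta k m τ z := by
  rw [jTheta, jTheta, ← (Equiv.subRight r).tsum_eq]
  refine tsum_congr fun j => ?_
  have h : ((j - r : ℤ) : ℂ) + (2 * m * r + k) / (2 * m) = j + k / (2 * m) := by
    push_cast; field_simp; ring
  rw [Equiv.subRight_apply, h]

lemma jTheta_zero_add_half_div {m : ℂ} (hm : m ≠ 0) (τ z : ℂ) :
    jTheta 0 m τ ((1 / 2 + z) / m) = jThetaM 0 m τ (z / m) := by
  refine tsum_congr fun j => ?_
  rw [← e2_intCast_div_two, ← e2, ← e2, ← e2_add]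
  congr 2; field_simp; ring

lemma jTheta_zero_neg_half_add_div {m : ℂ} (hm : m ≠ 0) (τ z : ℂ) :
    jTheta 0 m τ ((-(1 / 2) + z) / m) = jThetaM 0 m τ (z / m) := by
  have hsub : (-(1 / 2) + z) / m = (1 / 2 + z) / m - 1 / m := by ring
  rw [← jTheta_zero_add_half_div hm, hsub]
  refine tsum_congr fun j => ?_
  have hj : m * (j + 0 / (2 * m)) * ((1 / 2 + z) / m - 1 / m) =
      m * (j + 0 / (2 * m)) * ((1 / 2 + z) / m) + (-j : ℤ) := by
    push_cast; field_simp; ring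
  rw [hj, ← e2, e2_add, e2_intCast, mul_one, e2]

/-- The antisymmetric combination `θ_{k,m} - θ_{-k,m}`. -/
def jThetaDiff (k m τ z : ℂ) : ℂ := jTheta k m τ z - jTheta (-k) m τ z

lemma jThetaDiff_neg (k m τ z : ℂ) : jThetaDiff (-k) m τ z = -jThetaDiff k m τ z := by
  rw [jThetaDiff, jThetaDiff, neg_neg, neg_sub]

lemma jThetaDiff_two_mul_mul_add {m : ℂ} (hm : m ≠ 0) (k τ z : ℂ) (r : ℤ) :
    jThetaDiff (2 * m * r + k) m τ z = jThetaDiff k m τ z := by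
  have h : -(2 * m * r + k) = 2 * m * (-r : ℤ) + -k := by push_cast; ring
  rw [jThetaDiff, h, jTheta_two_mul_mul_add hm, jTheta_two_mul_mul_add hm, jThetaDiff]

lemma jThetaDiff_two_mul_mul_sub {m : ℂ} (hm : m ≠ 0) (k τ z : ℂ) (r : ℤ) :
    jThetaDiff (2 * m * r - k) m τ z = -jThetaDiff k m τ z := by
  rw [sub_eq_add_neg, jThetaDiff_two_mul_mul_add hm, jThetaDiff_neg]

lemma jThetaDiff_two_mul_mul_add_self {m : ℂ} (hm : m ≠ 0) (τ z : ℂ) (r : ℤ) :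
    jThetaDiff (2 * m * r + m) m τ z = 0 := by
  have h := jThetaDiff_two_mul_mul_sub hm m τ z (r + 1)
  rw [show 2 * m * ((r + 1 : ℤ) : ℂ) - m = 2 * m * r + m by push_cast; ring,
    jThetaDiff_two_mul_mul_add hm] at h
  rw [jThetaDiff_two_mul_mul_add hm]
  exact self_eq_neg.mp h

lemma mumford_one_one_neg (τ z : ℂ) : mumford 1 1 τ (-z) = -mumford 1 1 τ z := by
  rw [mumford, mumford, ← tsum_neg, ← (Equiv.subLeft (-1 : ℤ)).tsum_eq]
  refine tsum_congr fun n => ?_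
  have h : Complex.exp (((-n - 1 : ℤ) : ℂ) * (2 * Real.pi * I) + Real.pi * I) = -1 := by
    rw [Complex.exp_add, Complex.exp_int_mul_two_pi_mul_I, Complex.exp_pi_mul_I, one_mul]
  rw [← neg_one_mul (Complex.exp _), ← h, ← Complex.exp_add, Equiv.subLeft_apply]
  congr 1; push_cast; ring

end Theta

section MockTheta

lemma one_sub_e2_ne_zero {τ z : ℂ} (h : ¬ InLattice (2 * τ) (2 * z)) (n : ℤ) :
    1 - e2 (2 * z + 2 * τ * n) ≠ 0 := by
  intro h0
  obtain ⟨k, hk⟩ := Complex.exp_eq_one_iff.mp (sub_eq_zero.mp h0).symm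
  rw [mul_comm, mul_left_inj' Complex.two_pi_I_ne_zero] at hk
  exact h ⟨k, -n, by push_cast; linear_combination hk⟩

lemma InLattice.neg {τ z : ℂ} (h : InLattice τ z) : InLattice τ (-z) := by
  obtain ⟨a, b, rfl⟩ := h
  exact ⟨-a, -b, by push_cast; ring⟩

lemma one_sub_e2_neg_ne_zero {τ z : ℂ} (h : ¬ InLattice (2 * τ) (2 * z)) (n : ℤ) :
    1 - e2 (2 * -z + 2 * τ * n) ≠ 0 :=
  one_sub_e2_ne_zero (fun hz => h (by simpa using hz.neg)) n

lemma hasSum_Phi1 {τ m : ℂ} (hτ : 0 < τ.im) (hm : 0 < (τ * m).im) (s z1 z2 : ℂ) :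
    HasSum (fun j : ℤ =>
      e2 (2 * (τ * m) * j ^ 2 + (2 * m * (z1 + z2) + 2 * s * τ) * j + 2 * s * z1) /
        (1 - e2 (2 * z1 + 2 * τ * j)))
      (Phi1 m s (2 * τ) (2 * z1) (2 * z2) 0) := by
  have h2 : 0 < (2 * (τ * m)).im := by simpa using hm
  have hs := summable_e2_quadratic_div hτ h2 z1 (2 * m * (z1 + z2) + 2 * s * τ) (2 * s * z1)
  convert hs.hasSum using 1
  rw [Phi1, mul_zero, Complex.exp_zero, one_mul]
  refine tsum_congr fun j => ?_
  rw [← e2, qpow_eq_e2, qpow_eq_e2, ← e2_add, ← e2_add]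
  congr 2; ring

lemma Phi2_two_mul (m s τ z1 z2 : ℂ) :
    Phi2 m s τ (2 * z1) (2 * z2) 0 = Phi1 m s τ (2 * -z2) (2 * -z1) 0 := by
  rw [Phi1, Phi2]
  congr 1
  refine tsum_congr fun j => ?_
  congr 3 <;> ring_nf

lemma Phi1_add_one {τ m : ℂ} (hτ : 0 < τ.im) (hm : 0 < (τ * m).im) (s z1 z2 : ℂ)
    (hz : ∀ n : ℤ, 1 - e2 (2 * z1 + 2 * τ * n) ≠ 0) :
    Phi1 m (s + 1) (2 * τ) (2 * z1) (2 * z2) 0 = Phi1 m s (2 * τ) (2 * z1) (2 * z2) 0 -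
      e2 (s * (z1 - z2)) * qpow τ (-s ^ 2 / (2 * m)) * jTheta s m (2 * τ) (2 * (z1 + z2)) := by
  have hm0 : m ≠ 0 := by rintro rfl; simp at hm
  have h2 : 0 < (2 * τ * m).im := by rw [mul_assoc]; simpa using hm
  refine (hasSum_Phi1 hτ hm (s + 1) z1 z2).unique (HasSum.congr_fun
    ((hasSum_Phi1 hτ hm s z1 z2).sub ((hasSum_jTheta h2 s (2 * (z1 + z2))).mul_left _))
    fun j => ?_)
  set A := e2 (2 * (τ * m) * j ^ 2 + (2 * m * (z1 + z2) + 2 * s * τ) * j + 2 * s * z1) with hA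
  have hsucc : e2 (2 * (τ * m) * j ^ 2 + (2 * m * (z1 + z2) + 2 * (s + 1) * τ) * j +
      2 * (s + 1) * z1) = A * e2 (2 * z1 + 2 * τ * j) := by
    rw [hA, ← e2_add]
    congr 1; ring
  have htheta : e2 (s * (z1 - z2)) * qpow τ (-s ^ 2 / (2 * m)) *
      e2 (2 * τ * m * (j + s / (2 * m)) ^ 2 + m * (j + s / (2 * m)) * (2 * (z1 + z2))) = A := by
    rw [hA, qpow_eq_e2, ← e2_add, ← e2_add]
    congr 1; field_simp; ring
  rw [hsucc, htheta, div_eq_iff (hz j), sub_mul, div_mul_cancel₀ _ (hz j)]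
  ring

lemma Phi_add_natCast {τ m : ℂ} (hτ : 0 < τ.im) (hm : 0 < (τ * m).im) (s z1 z2 : ℂ)
    (hz1 : ∀ n : ℤ, 1 - e2 (2 * z1 + 2 * τ * n) ≠ 0)
    (hz2 : ∀ n : ℤ, 1 - e2 (2 * -z2 + 2 * τ * n) ≠ 0) (n : ℕ) :
    Phi m (s + n) (2 * τ) (2 * z1) (2 * z2) 0 = Phi m s (2 * τ) (2 * z1) (2 * z2) 0 -
      ∑ k ∈ Finset.range n, e2 ((s + k) * (z1 - z2)) * qpow τ (-(s + k) ^ 2 / (2 * m)) *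
        jThetaDiff (s + k) m (2 * τ) (2 * (z1 + z2)) := by
  induction n with
  | zero => simp
  | succ n ih =>
    rw [Phi, Phi2_two_mul] at ih ⊢
    rw [Finset.sum_range_succ, Nat.cast_succ, ← add_assoc, Phi1_add_one hτ hm _ _ _ hz1,
      Phi1_add_one hτ hm _ _ _ hz2, show 2 * (-z2 + -z1) = -(2 * (z1 + z2)) by ring, jTheta_neg,
      show -z2 - -z1 = z1 - z2 by ring, jThetaDiff]
    linear_combination ih

lemma Phi_add_half {τ : ℂ} (hτ : 0 < τ.im) {M : ℕ} (hM : 0 < M) {z1 z2 : ℂ}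
    (h1 : ¬ InLattice (2 * τ) (2 * z1)) (h2 : ¬ InLattice (2 * τ) (2 * z2)) (n : ℕ) :
    Phi (M / 2) (n + 1 / 2) (2 * τ) (2 * z1) (2 * z2) 0 =
      Phi (M / 2) (1 / 2) (2 * τ) (2 * z1) (2 * z2) 0 -
        ∑ k ∈ Finset.range n,
          Complex.exp (Real.pi * I * (1 + 2 * k) * (z1 - z2)) *
            qpow τ (-((1 + 2 * k) ^ 2) / (4 * M)) *
            jThetaDiff (1 / 2 + k) (M / 2) (2 * τ) (2 * (z1 + z2)) := by
  rw [add_comm (n : ℂ), Phi_add_natCast hτ (im_mul_natCast_div_two_pos hτ hM) _ _ _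
    (one_sub_e2_ne_zero h1) (one_sub_e2_neg_ne_zero h2)]
  congr 1
  refine Finset.sum_congr rfl fun k _ => ?_
  rw [e2]
  congr 3 <;> ring

end MockTheta

section Core

/-- The monomial `q^{J² + M n²} e^{2πiMn(z₁+z₂)} (q^{J+n} e^{2πiz₁})^k`. For odd `k` its alternating
sum over `J` vanishes, whereas its sum over `n` is a multiple of `θ_{k,M}(τ, z₁+z₂)`. -/
def lerchMonomial (M : ℕ) (τ z1 z2 : ℂ) (J n k : ℤ) : ℂ :=
  e2 (τ * (J ^ 2 + M * n ^ 2) + M * n * (z1 + z2) + k * (τ * (J + n) + z1))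

/-- The coefficient `q^{J² + Jk - k²/(4M)} e^{πikw}` with which `θ_{k,M}` occurs in the sum of
`lerchMonomial M τ z1 z2 J n k` over `n`, where `w = z1 - z2`. -/
def thetaCoeff (M : ℕ) (τ w : ℂ) (J k : ℤ) : ℂ :=
  e2 (τ * (J ^ 2 + J * k - k ^ 2 / (4 * M)) + k * w / 2)

lemma hasSum_mul_add {G : Type*} [AddGroup G] {f g : G → ℂ} {a b : ℂ} (hf : HasSum f a)
    (hg : HasSum g b) : HasSum (fun p : G × G => f p.1 * g (p.1 + p.2)) (a * b) :=
  (Equiv.prodShear (Equiv.refl G) Equiv.addLeft).hasSum_iff.mpr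
    (hf.mul hg (summable_mul_of_summable_norm hf.summable.norm hg.summable.norm))

lemma hasSum_zero_of_equiv_neg {ι E : Type*} [AddCommGroup E] [IsAddTorsionFree E]
    [TopologicalSpace E] [IsTopologicalAddGroup E] [T2Space E] {f : ι → E} (hf : Summable f)
    (e : ι ≃ ι) (he : ∀ x, f (e x) = -f x) : HasSum f 0 := by
  have h : HasSum f (-∑' x, f x) :=
    e.hasSum_iff.mp (HasSum.congr_fun hf.hasSum.neg he)
  rw [← self_eq_neg.mp (hf.hasSum.unique h)]
  exact hf.hasSum

lemma hasSum_lerchMonomial {τ : ℂ} (hτ : 0 < τ.im) {M : ℕ} (hM : 0 < M) (z1 z2 : ℂ) (J k : ℤ) :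
    HasSum (fun n => lerchMonomial M τ z1 z2 J n k)
      (thetaCoeff M τ (z1 - z2) J k * jTheta k M τ (z1 + z2)) := by
  have hM0 : (M : ℂ) ≠ 0 := Nat.cast_ne_zero.mpr hM.ne'
  refine HasSum.congr_fun
    ((hasSum_jTheta (im_mul_natCast_pos hτ hM) k (z1 + z2)).mul_left _) fun n => ?_
  rw [thetaCoeff, ← e2_add, lerchMonomial]
  congr 1; field_simp; ring

lemma hasSum_neg_one_zpow_mul_lerchMonomial {τ : ℂ} (hτ : 0 < τ.im) (M : ℕ) (z1 z2 : ℂ) (n : ℤ)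
    {k : ℤ} (hk : Odd k) : HasSum (fun J => (-1) ^ J * lerchMonomial M τ z1 z2 J n k) 0 := by
  refine hasSum_zero_of_equiv_neg ?_ (Equiv.subLeft (-k)) fun J => ?_
  · refine (summable_e2_quadratic hτ (k * τ + 1 / 2)
      (τ * (M * n ^ 2) + M * n * (z1 + z2) + k * (τ * n + z1))).congr fun J => ?_
    rw [lerchMonomial, ← e2_intCast_div_two, ← e2_add]
    congr 1; ring
  · have hsign : (-1 : ℂ) ^ (-k - J) = -(-1) ^ J := by
      rw [zpow_sub₀ (by simp), hk.neg.neg_one_zpow, neg_div, ← inv_eq_one_div, ← inv_zpow, inv_neg,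
        inv_one]
    rw [Equiv.subLeft_apply, hsign, neg_mul, lerchMonomial, lerchMonomial]
    congr 3; push_cast; ring

lemma lerchMonomial_two_mul_add_one (M : ℕ) (τ z1 z2 : ℂ) (J n i : ℤ) :
    lerchMonomial M τ z1 z2 J n (2 * i + 1) =
      lerchMonomial M τ z1 z2 J n 1 * e2 (2 * z1 + 2 * τ * (J + n : ℤ)) ^ i := by
  rw [lerchMonomial, lerchMonomial, e2_zpow, ← e2_add]
  congr 1; push_cast; ring

lemma norm_e2_add_mul_le (w v : ℂ) {t b : ℝ} (h : 0 ≤ t ∧ t ≤ b ∨ b ≤ t ∧ t ≤ 0) :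
    ‖e2 (w + t * v)‖ ≤ ‖e2 w‖ + ‖e2 (w + b * v)‖ := by
  have him : ∀ c : ℝ, (w + c * v).im = w.im + c * v.im := by simp
  have hmin : 0 ≤ t * v.im ∨ b * v.im ≤ t * v.im := by
    rcases h with ⟨h0, hb⟩ | ⟨hb, h0⟩ <;> rcases le_total 0 v.im with hv | hv
    · exact .inl (mul_nonneg h0 hv)
    · exact .inr (mul_le_mul_of_nonpos_right hb hv)
    · exact .inr (mul_le_mul_of_nonneg_right hb hv)
    · exact .inl (mul_nonneg_of_nonpos_of_nonpos h0 hv)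
  simp only [norm_e2, him]
  rcases hmin with hv | hv
  · refine le_add_of_le_of_nonneg (Real.exp_le_exp.mpr ?_) (Real.exp_pos _).le
    gcongr; linarith
  · refine le_add_of_nonneg_of_le (Real.exp_pos _).le (Real.exp_le_exp.mpr ?_)
    gcongr

lemma norm_signedSum_lerchMonomial_le (M : ℕ) (τ z1 z2 : ℂ) (J n : ℤ) :
    ‖signedSum n fun i => (-1) ^ J * lerchMonomial M τ z1 z2 J n (2 * i + 1)‖ ≤
      |(n : ℝ)| * (‖lerchMonomial M τ z1 z2 J n 0‖ + ‖lerchMonomial M τ z1 z2 J n (2 * n)‖) := by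
  refine norm_signedSum_le fun i hi => ?_
  have hi' : 0 ≤ 2 * i + 1 ∧ 2 * i + 1 ≤ 2 * n ∨ 2 * n ≤ 2 * i + 1 ∧ 2 * i + 1 ≤ 0 := by lia
  have h := norm_e2_add_mul_le (τ * (J ^ 2 + M * n ^ 2) + M * n * (z1 + z2)) (τ * (J + n) + z1)
    (t := (2 * i + 1 : ℤ)) (b := (2 * n : ℤ)) (mod_cast hi')
  rw [norm_mul, norm_zpow, norm_neg, norm_one, one_zpow, one_mul]
  simpa [lerchMonomial] using h

lemma summable_signedSum_lerchMonomial {τ : ℂ} (hτ : 0 < τ.im) {M : ℕ} (hM : 0 < M) (z1 z2 : ℂ) :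
    Summable fun p : ℤ × ℤ =>
      signedSum p.2 fun i => (-1) ^ p.1 * lerchMonomial M τ z1 z2 p.1 p.2 (2 * i + 1) := by
  have hJ := summable_abs_pow_mul_norm_e2 hτ 0 0 0
  have hn := summable_abs_pow_mul_norm_e2 (im_mul_natCast_pos hτ hM) (M * (z1 + z2)) 0 1
  have hn' := summable_abs_pow_mul_norm_e2 (im_mul_natCast_pos hτ M.succ_pos)
    (M * (z1 + z2) + 2 * z1) 0 1
  have h0 := hJ.mul_of_nonneg hn (fun _ => by positivity) (fun _ => by positivity)
  have hshear := ((Equiv.prodComm ℤ ℤ).trans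
    ((Equiv.prodShear (Equiv.refl ℤ) Equiv.addLeft).trans (Equiv.prodComm ℤ ℤ))).summable_iff.mpr
    (hJ.mul_of_nonneg hn' (fun _ => by positivity) (fun _ => by positivity))
  refine Summable.of_norm_bounded (h0.add hshear) fun ⟨J, n⟩ =>
    (norm_signedSum_lerchMonomial_le M τ z1 z2 J n).trans_eq ?_
  simp only [Function.comp, Equiv.trans_apply, Equiv.prodComm_apply, Prod.swap_prod_mk,
    Equiv.prodShear_apply, Equiv.refl_apply, Equiv.coe_addLeft, pow_zero, pow_one, one_mul]
  rw [mul_add, mul_left_comm ‖e2 (τ * (J : ℂ) ^ 2 + 0 * J + 0)‖,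
    mul_left_comm ‖e2 (τ * ((n + J : ℤ) : ℂ) ^ 2 + 0 * (n + J : ℤ) + 0)‖, ← norm_mul, ← norm_mul,
    ← e2_add, ← e2_add, lerchMonomial, lerchMonomial]
  congr 4 <;> (push_cast; ring)

lemma hasSum_signedSum_lerchMonomial {τ : ℂ} (hτ : 0 < τ.im) {M : ℕ} (hM : 0 < M) (z1 z2 : ℂ) :
    HasSum (fun p : ℤ × ℤ =>
      signedSum p.2 fun i => (-1) ^ p.1 * lerchMonomial M τ z1 z2 p.1 p.2 (2 * i + 1)) 0 := by
  have h := ((Equiv.prodComm ℤ ℤ).summable_iff.mpr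
    (summable_signedSum_lerchMonomial hτ hM z1 z2)).hasSum
  have hfiber : ∀ n : ℤ, HasSum (fun J : ℤ => signedSum n fun i =>
      (-1) ^ J * lerchMonomial M τ z1 z2 J n (2 * i + 1)) 0 := fun n => by
    have h0 := hasSum_signedSum (fun i => hasSum_neg_one_zpow_mul_lerchMonomial hτ M z1 z2 n
      (odd_two_mul_add_one i)) n
    rwa [show (signedSum n fun _ => (0 : ℂ)) = 0 by simp [signedSum]] at h0
  rw [(h.prod_fiberwise hfiber).unique hasSum_zero] at h
  exact (Equiv.prodComm ℤ ℤ).hasSum_iff.mp h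

lemma hasSum_lerchMonomial_mul_zpow_left {τ : ℂ} (hτ : 0 < τ.im) {M : ℕ} (hM : 0 < M)
    (z1 z2 : ℂ) :
    HasSum (fun p : ℤ × ℤ => (-1) ^ p.1 * lerchMonomial M τ z1 z2 p.1 p.2 1 *
        e2 (2 * z1 + 2 * τ * (p.1 + p.2 : ℤ)) ^ (M * p.1) /
          (1 - e2 (2 * z1 + 2 * τ * (p.1 + p.2 : ℤ))))
      (jThetaM 0 (M + 1) τ (M * (z1 - z2) / (M + 1)) *
        Phi1 (M / 2) (1 / 2) (2 * τ) (2 * z1) (2 * z2) 0) := by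
  have hM1 : (M : ℂ) + 1 ≠ 0 := M.cast_add_one_ne_zero
  have hθ := hasSum_jThetaM_zero (m := M + 1) (mod_cast im_mul_natCast_pos hτ M.succ_pos)
    (M * (z1 - z2) / (M + 1))
  have hΦ := hasSum_Phi1 hτ (im_mul_natCast_div_two_pos hτ hM) (1 / 2) z1 z2
  refine HasSum.congr_fun (hasSum_mul_add hθ hΦ) fun ⟨J, n⟩ => ?_
  dsimp only
  rw [← mul_div_assoc, mul_assoc ((-1 : ℂ) ^ J), mul_assoc ((-1 : ℂ) ^ J), lerchMonomial, e2_zpow,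
    ← e2_add, ← e2_add]
  congr 3; push_cast; field_simp; ring

lemma hasSum_lerchMonomial_mul_zpow_right {τ : ℂ} (hτ : 0 < τ.im) (M : ℕ) (z1 z2 : ℂ) :
    HasSum (fun p : ℤ × ℤ => (-1) ^ p.1 * lerchMonomial M τ z1 z2 p.1 p.2 1 *
        e2 (2 * z1 + 2 * τ * (p.1 + p.2 : ℤ)) ^ p.2 /
          (1 - e2 (2 * z1 + 2 * τ * (p.1 + p.2 : ℤ))))
      (jThetaM 0 (M + 1) τ ((z1 - z2) / (M + 1) + (z1 + z2)) * appellSum τ z1) := by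
  have hM1 : (M : ℂ) + 1 ≠ 0 := M.cast_add_one_ne_zero
  have hθ := hasSum_jThetaM_zero (m := M + 1) (mod_cast im_mul_natCast_pos hτ M.succ_pos)
    ((z1 - z2) / (M + 1) + (z1 + z2))
  have h := (Equiv.prodComm ℤ ℤ).hasSum_iff.mpr (hasSum_mul_add hθ (hasSum_appellSum hτ z1))
  refine HasSum.congr_fun h fun ⟨J, n⟩ => ?_
  have hsign : (-1 : ℂ) ^ J = (-1) ^ n * (-1) ^ (n + J) := by
    rw [zpow_add₀ (by simp), ← mul_assoc, ← mul_zpow]; simp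
  simp only [Function.comp, Equiv.prodComm_apply, Prod.swap_prod_mk]
  rw [← mul_div_assoc, ← mul_div_assoc, mul_mul_mul_comm, ← hsign, mul_assoc ((-1 : ℂ) ^ J),
    lerchMonomial, e2_zpow, ← e2_add, ← e2_add, add_comm J n]
  congr 3; push_cast; field_simp; ring

lemma hasSum_signedSum_mul_lerchMonomial {τ : ℂ} (hτ : 0 < τ.im) {M : ℕ} (hM : 0 < M)
    (z1 z2 : ℂ) (hz : ∀ n : ℤ, 1 - e2 (2 * z1 + 2 * τ * n) ≠ 0) :
    HasSum (fun p : ℤ × ℤ => signedSum (M * p.1) fun i =>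
        (-1) ^ p.1 * lerchMonomial M τ z1 z2 p.1 p.2 (2 * i + 1))
      (jThetaM 0 (M + 1) τ ((z1 - z2) / (M + 1) + (z1 + z2)) * appellSum τ z1 -
        jThetaM 0 (M + 1) τ (M * (z1 - z2) / (M + 1)) *
          Phi1 (M / 2) (1 / 2) (2 * τ) (2 * z1) (2 * z2) 0) := by
  have hsub := (hasSum_lerchMonomial_mul_zpow_right hτ M z1 z2).sub
    (hasSum_lerchMonomial_mul_zpow_left hτ hM z1 z2)
  have h := (hasSum_signedSum_lerchMonomial hτ hM z1 z2).add hsub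
  rw [zero_add] at h
  refine h.congr_fun fun p => ?_
  simp only [lerchMonomial_two_mul_add_one, ← mul_assoc]
  rw [signedSum_geom (e2_ne_zero _) (hz _), signedSum_geom (e2_ne_zero _) (hz _)]
  ring

lemma hasSum_signedSum_thetaCoeff {τ : ℂ} (hτ : 0 < τ.im) {M : ℕ} (hM : 0 < M) (z1 z2 : ℂ)
    (hz : ∀ n : ℤ, 1 - e2 (2 * z1 + 2 * τ * n) ≠ 0) :
    HasSum (fun J : ℤ => signedSum (M * J) fun i => (-1) ^ J *
        (thetaCoeff M τ (z1 - z2) J (2 * i + 1) * jTheta (2 * i + 1 : ℤ) M τ (z1 + z2)))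
      (jThetaM 0 (M + 1) τ ((z1 - z2) / (M + 1) + (z1 + z2)) * appellSum τ z1 -
        jThetaM 0 (M + 1) τ (M * (z1 - z2) / (M + 1)) *
          Phi1 (M / 2) (1 / 2) (2 * τ) (2 * z1) (2 * z2) 0) := by
  refine (hasSum_signedSum_mul_lerchMonomial hτ hM z1 z2 hz).prod_fiberwise fun J => ?_
  dsimp only
  exact hasSum_signedSum (fun i => (hasSum_lerchMonomial hτ hM z1 z2 J (2 * i + 1)).mul_left _) _

end Core

section Folding

lemma hasSum_signedSum_thetaCoeff_mul_jThetaDiff {τ : ℂ} (hτ : 0 < τ.im) {M : ℕ} (hM : 0 < M)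
    (z1 z2 : ℂ) (hz1 : ∀ n : ℤ, 1 - e2 (2 * z1 + 2 * τ * n) ≠ 0)
    (hz2 : ∀ n : ℤ, 1 - e2 (2 * -z2 + 2 * τ * n) ≠ 0) :
    HasSum (fun J : ℤ => signedSum (M * J) fun i => (-1) ^ J *
        (thetaCoeff M τ (z1 - z2) J (2 * i + 1) * jThetaDiff (2 * i + 1 : ℤ) M τ (z1 + z2)))
      (jThetaM 0 (M + 1) τ ((z1 - z2) / (M + 1) + (z1 + z2)) * appellSum τ z1 -
        jThetaM 0 (M + 1) τ ((z1 - z2) / (M + 1) - (z1 + z2)) * appellSum τ (-z2) -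
        jThetaM 0 (M + 1) τ (M * (z1 - z2) / (M + 1)) *
          Phi (M / 2) (1 / 2) (2 * τ) (2 * z1) (2 * z2) 0) := by
  have h := (hasSum_signedSum_thetaCoeff hτ hM z1 z2 hz1).sub
    (hasSum_signedSum_thetaCoeff hτ hM (-z2) (-z1) hz2)
  rw [show -z2 - -z1 = z1 - z2 by ring, show -z2 + -z1 = -(z1 + z2) by ring,
    sub_sub_sub_comm, ← mul_sub, ← sub_eq_add_neg, ← Phi2_two_mul, ← Phi] at h
  refine h.congr_fun fun J => ?_
  rw [← signedSum_sub]
  simp only [jTheta_neg, jThetaDiff, mul_sub]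

lemma hasSum_nat_succ_add_neg {E : Type*} [AddCommGroup E] [TopologicalSpace E]
    [IsTopologicalAddGroup E] {f : ℤ → E} {a : E} (hf : HasSum f a) (h0 : f 0 = 0) :
    HasSum (fun j : ℕ => f (j + 1 : ℕ) + f (-(j + 1 : ℕ))) a := by
  simpa [h0] using (hasSum_nat_add_iff' 1).mpr hf.nat_add_neg

/-- The coefficient of `θ_{k,M} - θ_{-k,M}` after the terms `(J, k)` and `(-J, -k)` of the sum
over `ℤ` have been combined. -/
def foldedCoeff (M : ℕ) (τ w : ℂ) (J : ℕ) (k : ℤ) : ℂ :=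
  (-1) ^ J * (thetaCoeff M τ w J k + thetaCoeff M τ (-w) J k)

lemma foldedCoeff_eq {M : ℕ} (hM : 0 < M) (τ w : ℂ) (J : ℕ) (k : ℤ) :
    foldedCoeff M τ w J k =
      (-1) ^ J * qpow τ ((M + 1) * J ^ 2 - (2 * M * J - k) ^ 2 / (4 * M)) *
        (Complex.exp (Real.pi * I * k * w) + Complex.exp (-(Real.pi * I) * k * w)) := by
  have hM0 : (M : ℂ) ≠ 0 := Nat.cast_ne_zero.mpr hM.ne'
  have hexp : ∀ v : ℂ, Complex.exp (Real.pi * I * k * v) = e2 (k * v / 2) := fun v => by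
    rw [e2]; congr 1; ring
  have hneg : -(Real.pi * I) * k * w = Real.pi * I * k * -w := by ring
  rw [foldedCoeff, hneg, hexp, hexp, qpow_eq_e2, mul_assoc ((-1 : ℂ) ^ J), mul_add (e2 _),
    ← e2_add, ← e2_add, thetaCoeff, thetaCoeff]
  congr 3 <;> (push_cast; field_simp; ring)

lemma foldedCoeff_two_mul_mul_add {M : ℕ} (hM : 0 < M) (τ w : ℂ) (J r k : ℕ) :
    foldedCoeff M τ w J (2 * M * r + k) =
      (-1) ^ J * qpow τ ((M + 1) * J ^ 2 - (2 * M * (J - r) - k) ^ 2 / (4 * M)) *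
        (Complex.exp (Real.pi * I * (2 * M * r + k) * w) +
          Complex.exp (-(Real.pi * I) * (2 * M * r + k) * w)) := by
  rw [foldedCoeff_eq hM, show (2 * M * (J - r) - k : ℂ) = 2 * M * J - (2 * M * r + k) by ring]
  push_cast
  rfl

lemma foldedCoeff_two_mul_mul_sub {M : ℕ} (hM : 0 < M) (τ w : ℂ) (J r k : ℕ) :
    foldedCoeff M τ w J (2 * M * r - k) =
      (-1) ^ J * qpow τ ((M + 1) * J ^ 2 - (2 * M * (J - r) + k) ^ 2 / (4 * M)) *
        (Complex.exp (Real.pi * I * (2 * M * r - k) * w) +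
          Complex.exp (-(Real.pi * I) * (2 * M * r - k) * w)) := by
  rw [foldedCoeff_eq hM, show (2 * M * (J - r) + k : ℂ) = 2 * M * J - (2 * M * r - k) by ring]
  push_cast
  rfl

lemma thetaCoeff_neg_neg (M : ℕ) (τ w : ℂ) (J k : ℤ) :
    thetaCoeff M τ w (-J) (-k) = thetaCoeff M τ (-w) J k := by
  rw [thetaCoeff, thetaCoeff]
  congr 1; push_cast; ring

lemma signedSum_thetaCoeff_add_neg (M : ℕ) (τ w : ℂ) {D : ℤ → ℂ} (hD : ∀ k, D (-k) = -D k)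
    (J : ℕ) :
    (signedSum (M * J) fun i => (-1) ^ (J : ℤ) *
        (thetaCoeff M τ w J (2 * i + 1) * D (2 * i + 1))) +
      (signedSum (M * -J) fun i => (-1) ^ (-J : ℤ) *
        (thetaCoeff M τ w (-J) (2 * i + 1) * D (2 * i + 1))) =
      ∑ i ∈ Finset.range (M * J), foldedCoeff M τ w J (2 * i + 1) * D (2 * i + 1) := by
  rw [mul_neg, ← Nat.cast_mul, signedSum_natCast, signedSum_neg_natCast,
    ← Finset.sum_neg_distrib, ← Finset.sum_add_distrib]
  refine Finset.sum_congr rfl fun i _ => ?_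
  rw [show 2 * (-1 - (i : ℤ)) + 1 = -(2 * i + 1) by ring, thetaCoeff_neg_neg, hD, foldedCoeff,
    zpow_neg, ← inv_zpow, inv_neg_one, zpow_natCast]
  ring

lemma hasSum_foldedCoeff_mul_jThetaDiff {τ : ℂ} (hτ : 0 < τ.im) {M : ℕ} (hM : 0 < M)
    (z1 z2 : ℂ) (hz1 : ∀ n : ℤ, 1 - e2 (2 * z1 + 2 * τ * n) ≠ 0)
    (hz2 : ∀ n : ℤ, 1 - e2 (2 * -z2 + 2 * τ * n) ≠ 0) :
    HasSum (fun j : ℕ => ∑ i ∈ Finset.range (M * (j + 1)),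
        foldedCoeff M τ (z1 - z2) (j + 1) (2 * i + 1) *
          jThetaDiff (2 * i + 1 : ℤ) M τ (z1 + z2))
      (jThetaM 0 (M + 1) τ ((z1 - z2) / (M + 1) + (z1 + z2)) * appellSum τ z1 -
        jThetaM 0 (M + 1) τ ((z1 - z2) / (M + 1) - (z1 + z2)) * appellSum τ (-z2) -
        jThetaM 0 (M + 1) τ (M * (z1 - z2) / (M + 1)) *
          Phi (M / 2) (1 / 2) (2 * τ) (2 * z1) (2 * z2) 0) := by
  have h := hasSum_nat_succ_add_neg (hasSum_signedSum_thetaCoeff_mul_jThetaDiff hτ hM z1 z2 hz1 hz2)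
    (by rw [mul_zero, signedSum_zero])
  refine h.congr_fun fun j => ?_
  exact (signedSum_thetaCoeff_add_neg M τ (z1 - z2) (D := fun k => jThetaDiff k M τ (z1 + z2))
    (fun k => by rw [Int.cast_neg, jThetaDiff_neg]) (j + 1)).symm

end Folding

section Residues

lemma sum_range_two_mul_add_one {E : Type*} [AddCommMonoid E] {M : ℕ} {g : ℤ → E} (h0 : g M = 0) :
    ∑ i ∈ Finset.range M, g (2 * i + 1) =
      ∑ k ∈ (Finset.Icc 1 (M - 1)).filter (fun k => Odd k), g k +
        ∑ k ∈ (Finset.Icc 1 (M - 1)).filter (fun k => Odd k), g (2 * M - k) := by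
  rw [← Finset.sum_filter_add_sum_filter_not (Finset.range M) (fun i => 2 * i + 1 < M)]
  congr 1
  · refine Finset.sum_nbij' (fun i => 2 * i + 1) (fun k => k / 2) ?_ ?_ ?_ ?_ ?_ <;>
      simp only [Finset.mem_filter, Finset.mem_range, Finset.mem_Icc] <;> grind
  · rw [← Finset.sum_filter_of_ne (p := fun i => 2 * i + 1 ≠ M)]
    · refine Finset.sum_nbij' (fun i => 2 * M - (2 * i + 1)) (fun k => (2 * M - 1 - k) / 2)
        ?_ ?_ ?_ ?_ ?_ <;>
        simp only [Finset.mem_filter, Finset.mem_range, Finset.mem_Icc] <;> grind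
    · rintro i - hi rfl
      exact hi (mod_cast h0)

lemma sum_range_mul_two_mul_add_one {E : Type*} [AddCommMonoid E] {M : ℕ} {f : ℤ → E}
    (h0 : ∀ r : ℕ, f (2 * M * r + M) = 0) (J : ℕ) :
    ∑ i ∈ Finset.range (M * J), f (2 * i + 1) =
      ∑ r ∈ Finset.range J, ∑ k ∈ (Finset.Icc 1 (M - 1)).filter (fun k => Odd k),
          f (2 * M * r + k) +
        ∑ r ∈ Finset.Icc 1 J, ∑ k ∈ (Finset.Icc 1 (M - 1)).filter (fun k => Odd k),
          f (2 * M * r - k) := by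
  induction J with
  | zero => simp
  | succ J ih =>
    have hblock := sum_range_two_mul_add_one (g := fun x => f (2 * M * J + x)) (h0 J)
    have hlow : ∀ i : ℕ, 2 * ((M * J + i : ℕ) : ℤ) + 1 = 2 * M * J + (2 * i + 1) := fun i => by
      push_cast; ring
    have hhigh : ∀ k : ℕ, 2 * M * ((J + 1 : ℕ) : ℤ) - k = 2 * M * J + (2 * M - k) := fun k => by
      push_cast; ring
    rw [Nat.mul_succ, Finset.sum_range_add, ih, Finset.sum_range_succ,
      Finset.sum_Icc_succ_top (by lia)]
    simp only [hlow, hhigh, hblock]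
    abel

lemma norm_thetaCoeff_le {M : ℕ} (hM : 0 < M) {τ : ℂ} (hτ : 0 < τ.im) (w : ℂ) {J k : ℤ}
    (h0 : 0 ≤ k) (hk : k ≤ 2 * M * J) :
    ‖thetaCoeff M τ w J k‖ ≤ ‖e2 (τ * J ^ 2 + -(M * |w.im| : ℝ) * I * J)‖ := by
  have : (0 : ℝ) < M := Nat.cast_pos.mpr hM
  have h0' : (0 : ℝ) ≤ k := mod_cast h0
  have hk' : (k : ℝ) ≤ 2 * M * J := mod_cast hk
  have hsq : (k : ℝ) ^ 2 / (4 * M) ≤ J * k := by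
    rw [div_le_iff₀ (by positivity)]
    nlinarith
  have hlin : -(M * |w.im| * J) ≤ k * w.im / 2 := by
    nlinarith [neg_abs_le w.im, abs_nonneg w.im]
  have him : (τ * (J ^ 2 + J * k - k ^ 2 / (4 * M)) + k * w / 2).im =
      τ.im * (J ^ 2 + J * k - k ^ 2 / (4 * M)) + k * w.im / 2 := by
    have hreal : τ * (J ^ 2 + J * k - k ^ 2 / (4 * M)) + k * w / 2 =
        τ * (J ^ 2 + J * k - k ^ 2 / (4 * M) : ℝ) + (k / 2 : ℝ) * w := by push_cast; ring
    rw [hreal, Complex.add_im, Complex.im_mul_ofReal, Complex.im_ofReal_mul, mul_div_right_comm]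
  have him' : (τ * J ^ 2 + -(M * |w.im| : ℝ) * I * J).im =
      τ.im * J ^ 2 - M * |w.im| * J := by
    simp [← Complex.ofReal_intCast, ← Complex.ofReal_pow, sub_eq_add_neg]
  rw [thetaCoeff, norm_e2, norm_e2, him, him', Real.exp_le_exp]
  have := mul_le_mul_of_nonneg_left hsq hτ.le
  nlinarith [Real.pi_pos]

lemma norm_foldedCoeff_le {M : ℕ} (hM : 0 < M) {τ : ℂ} (hτ : 0 < τ.im) (w : ℂ) {J : ℕ} {k : ℤ}
    (h0 : 0 ≤ k) (hk : k ≤ 2 * M * J) :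
    ‖foldedCoeff M τ w J k‖ ≤
      2 * ‖e2 (τ * (J : ℤ) ^ 2 + -(M * |w.im| : ℝ) * I * (J : ℤ))‖ := by
  have hneg := norm_thetaCoeff_le hM hτ (-w) h0 hk
  rw [Complex.neg_im, abs_neg] at hneg
  rw [foldedCoeff, norm_mul, norm_pow, norm_neg, norm_one, one_pow, one_mul, two_mul]
  exact norm_add_le_of_le (norm_thetaCoeff_le hM hτ w h0 hk) hneg

lemma summable_sum_foldedCoeff_mul {M : ℕ} (hM : 0 < M) {τ : ℂ} (hτ : 0 < τ.im) (w : ℂ)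
    {S : ℕ → Finset ℕ} (hS : ∀ j, (S j).card ≤ j + 1) {K : Finset ℕ} {κ : ℕ → ℕ → ℤ}
    (hκ : ∀ j, ∀ r ∈ S j, ∀ k ∈ K, 0 ≤ κ r k ∧ κ r k ≤ 2 * M * (j + 1 : ℕ)) (d : ℕ → ℂ) :
    Summable fun j : ℕ => ∑ r ∈ S j, ∑ k ∈ K, foldedCoeff M τ w (j + 1) (κ r k) * d k := by
  have hg := (summable_abs_pow_mul_norm_e2 hτ (-(M * |w.im| : ℝ) * I) 0 1).comp_injective
    (i := fun j : ℕ => ((j + 1 : ℕ) : ℤ)) fun a b h => by simpa using h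
  simp only [Function.comp_def, add_zero] at hg
  refine Summable.of_norm_bounded (hg.mul_right (2 * ∑ k ∈ K, ‖d k‖)) fun j => ?_
  set X := ‖e2 (τ * ((j + 1 : ℕ) : ℤ) ^ 2 + -(M * |w.im| : ℝ) * I * ((j + 1 : ℕ) : ℤ))‖
  have hterm : ∀ r ∈ S j, ‖∑ k ∈ K, foldedCoeff M τ w (j + 1) (κ r k) * d k‖ ≤
      2 * X * ∑ k ∈ K, ‖d k‖ := fun r hr => by
    rw [Finset.mul_sum]
    refine norm_sum_le_of_le K fun k hk => ?_
    rw [norm_mul]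
    gcongr
    exact norm_foldedCoeff_le hM hτ w (hκ j r hr k hk).1 (hκ j r hr k hk).2
  calc ‖∑ r ∈ S j, ∑ k ∈ K, foldedCoeff M τ w (j + 1) (κ r k) * d k‖
      ≤ (S j).card * (2 * X * ∑ k ∈ K, ‖d k‖) := by
        simpa using norm_sum_le_of_le (S j) hterm
    _ ≤ (j + 1 : ℕ) * (2 * X * ∑ k ∈ K, ‖d k‖) := by
        gcongr
        exact hS j
    _ = |(((j + 1 : ℕ) : ℤ) : ℝ)| ^ 1 * X * (2 * ∑ k ∈ K, ‖d k‖) := by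
        rw [Int.cast_natCast, Nat.abs_cast]
        ring

end Residues

section HalfCase

lemma le_of_mem_filter_odd {M k : ℕ} (hk : k ∈ (Finset.Icc 1 (M - 1)).filter fun k => Odd k) :
    k ≤ M :=
  (Finset.mem_Icc.mp (Finset.mem_filter.mp hk).1).2.trans (Nat.sub_le M 1)

lemma summable_sum_foldedCoeff_sub_mul {M : ℕ} (hM : 0 < M) {τ : ℂ} (hτ : 0 < τ.im) (w : ℂ)
    (d : ℕ → ℂ) :
    Summable fun j : ℕ => ∑ r ∈ Finset.Icc 1 (j + 1),
      ∑ k ∈ (Finset.Icc 1 (M - 1)).filter (fun k => Odd k),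
        foldedCoeff M τ w (j + 1) (2 * M * r - k) * d k := by
  refine summable_sum_foldedCoeff_mul hM hτ w (by simp) (κ := fun r k => 2 * M * r - k)
    (fun j r hr k hk => ?_) d
  have hkM : (k : ℤ) ≤ M := mod_cast le_of_mem_filter_odd hk
  obtain ⟨hr1, hr2⟩ := Finset.mem_Icc.mp hr
  zify at hr1 hr2 ⊢
  constructor <;> nlinarith

lemma summable_sum_foldedCoeff_add_mul {M : ℕ} (hM : 0 < M) {τ : ℂ} (hτ : 0 < τ.im) (w : ℂ)
    (d : ℕ → ℂ) :
    Summable fun j : ℕ => ∑ r ∈ Finset.range (j + 1),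
      ∑ k ∈ (Finset.Icc 1 (M - 1)).filter (fun k => Odd k),
        foldedCoeff M τ w (j + 1) (2 * M * r + k) * d k := by
  refine summable_sum_foldedCoeff_mul hM hτ w (by simp) (κ := fun r k => 2 * M * r + k)
    (fun j r hr k hk => ⟨by positivity, ?_⟩) d
  have hkM := le_of_mem_filter_odd hk
  have hrj := Finset.mem_range_succ_iff.mp hr
  zify at hkM hrj ⊢
  nlinarith

lemma sum_range_foldedCoeff_mul_jThetaDiff {M : ℕ} (hM : 0 < M) (τ w z : ℂ) (J : ℕ) :
    ∑ i ∈ Finset.range (M * J),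
        foldedCoeff M τ w J (2 * i + 1) * jThetaDiff (2 * i + 1 : ℤ) M τ z =
      ∑ r ∈ Finset.range J, ∑ k ∈ (Finset.Icc 1 (M - 1)).filter (fun k => Odd k),
          foldedCoeff M τ w J (2 * M * r + k) * jThetaDiff k M τ z -
        ∑ r ∈ Finset.Icc 1 J, ∑ k ∈ (Finset.Icc 1 (M - 1)).filter (fun k => Odd k),
          foldedCoeff M τ w J (2 * M * r - k) * jThetaDiff k M τ z := by
  have hM0 : (M : ℂ) ≠ 0 := Nat.cast_ne_zero.mpr hM.ne'
  have hadd : ∀ r k : ℕ, jThetaDiff (2 * M * r + k : ℤ) M τ z = jThetaDiff k M τ z :=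
    fun r k => by simpa using jThetaDiff_two_mul_mul_add hM0 k τ z r
  have hsub : ∀ r k : ℕ, jThetaDiff (2 * M * r - k : ℤ) M τ z = -jThetaDiff k M τ z :=
    fun r k => by simpa using jThetaDiff_two_mul_mul_sub hM0 k τ z r
  have hmid : ∀ r : ℕ, jThetaDiff (2 * M * r + M : ℤ) M τ z = 0 :=
    fun r => by simpa using jThetaDiff_two_mul_mul_add_self hM0 τ z r
  rw [sum_range_mul_two_mul_add_one
    (f := fun k => foldedCoeff M τ w J k * jThetaDiff k M τ z)
    (fun r => by simpa using Or.inr (hmid r)), sub_eq_add_neg]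
  push_cast at hadd hsub ⊢
  simp only [hadd, hsub, mul_neg, Finset.sum_neg_distrib]

lemma jThetaM_mul_Phi_half {τ : ℂ} (hτ : 0 < τ.im) {M : ℕ} (hM : 0 < M) (z1 z2 : ℂ)
    (hz1 : ∀ n : ℤ, 1 - e2 (2 * z1 + 2 * τ * n) ≠ 0)
    (hz2 : ∀ n : ℤ, 1 - e2 (2 * -z2 + 2 * τ * n) ≠ 0) :
    jThetaM 0 (M + 1) τ (M * (z1 - z2) / (M + 1)) *
        Phi (M / 2) (1 / 2) (2 * τ) (2 * z1) (2 * z2) 0 =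
      jThetaM 0 (M + 1) τ ((z1 - z2) / (M + 1) + (z1 + z2)) * appellSum τ z1 -
        jThetaM 0 (M + 1) τ ((z1 - z2) / (M + 1) - (z1 + z2)) * appellSum τ (-z2) +
        (∑' j : ℕ, ∑ r ∈ Finset.Icc 1 (j + 1),
          ∑ k ∈ (Finset.Icc 1 (M - 1)).filter (fun k => Odd k),
            foldedCoeff M τ (z1 - z2) (j + 1) (2 * M * r - k) * jThetaDiff k M τ (z1 + z2)) -
        (∑' j : ℕ, ∑ r ∈ Finset.range (j + 1),
          ∑ k ∈ (Finset.Icc 1 (M - 1)).filter (fun k => Odd k),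
            foldedCoeff M τ (z1 - z2) (j + 1) (2 * M * r + k) * jThetaDiff k M τ (z1 + z2)) := by
  have hsum := (hasSum_foldedCoeff_mul_jThetaDiff hτ hM z1 z2 hz1 hz2).tsum_eq
  rw [tsum_congr fun j => sum_range_foldedCoeff_mul_jThetaDiff hM τ (z1 - z2) (z1 + z2) (j + 1),
    (summable_sum_foldedCoeff_add_mul hM hτ _ _).tsum_sub
      (summable_sum_foldedCoeff_sub_mul hM hτ _ _)] at hsum
  linear_combination hsum

lemma jTheta_mul_Phi_half {τ : ℂ} (hτ : 0 < τ.im) {M : ℕ} (hM : 0 < M) {z1 z2 : ℂ}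
    (h1 : ¬ InLattice (2 * τ) (2 * z1)) (h2 : ¬ InLattice (2 * τ) (2 * z2)) :
    jTheta 0 (M + 1) τ ((-(1 / 2) + M * (z1 - z2)) / (M + 1)) *
        Phi (M / 2) (1 / 2) (2 * τ) (2 * z1) (2 * z2) 0 =
      -I * eta (2 * τ) ^ 3 *
          (jTheta 0 (M + 1) τ ((1 / 2 + z1 - z2) / (M + 1) + z1 + z2) /
              mumford 1 1 (2 * τ) (2 * z1) +
            jTheta 0 (M + 1) τ ((1 / 2 + z1 - z2) / (M + 1) - z1 - z2) /
              mumford 1 1 (2 * τ) (2 * z2)) +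
        (∑' j : ℕ, ∑ r ∈ Finset.Icc 1 (j + 1),
          ∑ k ∈ (Finset.Icc 1 (M - 1)).filter (fun k => Odd k),
            foldedCoeff M τ (z1 - z2) (j + 1) (2 * M * r - k) * jThetaDiff k M τ (z1 + z2)) -
        (∑' j : ℕ, ∑ r ∈ Finset.range (j + 1),
          ∑ k ∈ (Finset.Icc 1 (M - 1)).filter (fun k => Odd k),
            foldedCoeff M τ (z1 - z2) (j + 1) (2 * M * r + k) * jThetaDiff k M τ (z1 + z2)) := by
  have hM0 : (M : ℂ) + 1 ≠ 0 := Nat.cast_add_one_ne_zero M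
  have hz1 := one_sub_e2_ne_zero h1
  have hz2 := one_sub_e2_neg_ne_zero h2
  have hplus : (1 / 2 + z1 - z2) / (M + 1) + z1 + z2 =
      (1 / 2 + (z1 - z2 + (M + 1) * (z1 + z2))) / (M + 1) := by field_simp; ring
  have hminus : (1 / 2 + z1 - z2) / (M + 1) - z1 - z2 =
      (1 / 2 + (z1 - z2 - (M + 1) * (z1 + z2))) / (M + 1) := by field_simp; ring
  have hA1 := neg_I_mul_eta_pow_three_div_mumford hτ z1 hz1
  have hA2 := neg_I_mul_eta_pow_three_div_mumford hτ (-z2) hz2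
  rw [mul_neg, mumford_one_one_neg, div_neg] at hA2
  rw [hplus, hminus, jTheta_zero_add_half_div hM0, jTheta_zero_add_half_div hM0,
    jTheta_zero_neg_half_add_div hM0, add_div (z1 - z2), sub_div (z1 - z2),
    mul_div_cancel_left₀ _ hM0, jThetaM_mul_Phi_half hτ hM z1 z2 hz1 hz2, ← hA1, ← hA2]
  ring

end HalfCase

theorem statement14 (m : ℝ) (M : ℕ) (hM : 0 < M) (hm : m = M / 2)
    (n : ℕ) (s : ℝ) (hs : s = n + 1 / 2)
    (τ : ℂ) (hτ : 0 < τ.im) (z1 z2 : ℂ)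
    (h1 : ¬ InLattice (2 * τ) (2 * z1)) (h2 : ¬ InLattice (2 * τ) (2 * z2)) :
    jTheta 0 (2 * (m : ℂ) + 1) τ
          ((-(1 / 2) + 2 * (m : ℂ) * (z1 - z2)) / (2 * (m : ℂ) + 1)) *
        Phi (m : ℂ) (s : ℂ) (2 * τ) (2 * z1) (2 * z2) 0 =
      -Complex.I * eta (2 * τ) ^ 3 *
          (jTheta 0 (2 * (m : ℂ) + 1) τ
              ((1 / 2 + z1 - z2) / (2 * (m : ℂ) + 1) + z1 + z2) /
              mumford 1 1 (2 * τ) (2 * z1) +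
            jTheta 0 (2 * (m : ℂ) + 1) τ
              ((1 / 2 + z1 - z2) / (2 * (m : ℂ) + 1) - z1 - z2) /
              mumford 1 1 (2 * τ) (2 * z2)) +
        (∑' j : ℕ, ∑ r ∈ Finset.Icc 1 (j + 1),
          ∑ k ∈ (Finset.Icc 1 (M - 1)).filter (fun k => Odd k),
            (-1 : ℂ) ^ (j + 1) *
              qpow τ ((2 * (m : ℂ) + 1) * ((j : ℂ) + 1) ^ 2 -
                (4 * (m : ℂ) * ((j : ℂ) + 1 - (r : ℂ)) + (k : ℂ)) ^ 2 / (8 * (m : ℂ))) *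
              (Complex.exp (Real.pi * Complex.I *
                  (4 * (m : ℂ) * (r : ℂ) - (k : ℂ)) * (z1 - z2)) +
                Complex.exp (-(Real.pi * Complex.I) *
                  (4 * (m : ℂ) * (r : ℂ) - (k : ℂ)) * (z1 - z2))) *
              (jTheta (k : ℂ) (2 * (m : ℂ)) τ (z1 + z2) -
                jTheta (-(k : ℂ)) (2 * (m : ℂ)) τ (z1 + z2))) -
        (∑' j : ℕ, ∑ r ∈ Finset.range (j + 1),
          ∑ k ∈ (Finset.Icc 1 (M - 1)).filter (fun k => Odd k),
            (-1 : ℂ) ^ (j + 1) *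
              qpow τ ((2 * (m : ℂ) + 1) * ((j : ℂ) + 1) ^ 2 -
                (4 * (m : ℂ) * ((j : ℂ) + 1 - (r : ℂ)) - (k : ℂ)) ^ 2 / (8 * (m : ℂ))) *
              (Complex.exp (Real.pi * Complex.I *
                  (4 * (m : ℂ) * (r : ℂ) + (k : ℂ)) * (z1 - z2)) +
                Complex.exp (-(Real.pi * Complex.I) *
                  (4 * (m : ℂ) * (r : ℂ) + (k : ℂ)) * (z1 - z2))) *
              (jTheta (k : ℂ) (2 * (m : ℂ)) τ (z1 + z2) -
                jTheta (-(k : ℂ)) (2 * (m : ℂ)) τ (z1 + z2))) -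
        jTheta 0 (2 * (m : ℂ) + 1) τ
            ((-(1 / 2) + 2 * (m : ℂ) * (z1 - z2)) / (2 * (m : ℂ) + 1)) *
          ∑ k ∈ Finset.range n,
            Complex.exp (Real.pi * Complex.I * (1 + 2 * (k : ℂ)) * (z1 - z2)) *
              qpow τ (-((1 + 2 * (k : ℂ)) ^ 2) / (8 * (m : ℂ))) *
              (jTheta (1 / 2 + (k : ℂ)) (m : ℂ) (2 * τ) (2 * (z1 + z2)) -
                jTheta (-(1 / 2 + (k : ℂ))) (m : ℂ) (2 * τ) (2 * (z1 + z2))) := by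
  have hm' : (m : ℂ) = M / 2 := by rw [hm]; push_cast; rfl
  have hs' : (s : ℂ) = n + 1 / 2 := by rw [hs]; push_cast; rfl
  have hM2 : 2 * ((M : ℂ) / 2) = M := by ring
  have hM4 : 4 * ((M : ℂ) / 2) = 2 * M := by ring
  have hM8 : 8 * ((M : ℂ) / 2) = 4 * M := by ring
  rw [hm', hs', hM2, hM4, hM8, Phi_add_half hτ hM h1 h2, mul_sub, jTheta_mul_Phi_half hτ hM h1 h2]
  simp only [foldedCoeff_two_mul_mul_sub hM, foldedCoeff_two_mul_mul_add hM, Nat.cast_add_one,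
    jThetaDiff]

end Wakimoto
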